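/- arXiv:1503.04629 — 2 statements merged into one kernel-verified Lean document; each statement's English description precedes it below -/
import Mathlib

section
/- Assertion (2) of Theorem A. Assume ε ≥ 0 and that P_ε satisfies hypotheses (H1) and (H2). Then for each ℓ,k ∈ ℤ⁺, each λ₀ > 0 and every compact set K_a ⊂ A there exists ε₀ > 0 such that the fundamental homogeneous solution can be written as D(s+ϑ_ε; ε,a,λ) = s^ℓ·h_ℓ(s; ε,a,λ), where Θ_λ^r h_ℓ(s) → 0 as s → 0⁺, uniformly on 𝒜 := [0,ε₀] × K_a × [λ₀,∞), for every r = 0,1,…,k. -/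
open Set Filter Topology Real intervalIntegral

noncomputable section

/-- The differential operator `Θ_λ = (1/λ)·s·∂_s`. -/
def Theta (lam : ℝ) (f : ℝ → ℝ) : ℝ → ℝ :=
  fun s => (1 / lam) * s * deriv f s

/-- The fundamental solution `D(x;ε,a,λ) = exp(λ∫₁ˣ V_a(t)/P_ε(t) dt)` of the homogeneous
linear equation `P_ε(x)y′ = λV_a(x)y`; it coincides with the Dulac map of the saddle
`(ϑ_ε,0)` of `P_ε(x)∂_x − λV_a(x)y∂_y`. -/
def Dfun {E : Type*} (P : ℝ → ℝ → ℝ) (V : E → ℝ → ℝ) (x ε : ℝ) (a : E) (lam : ℝ) : ℝ :=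
  Real.exp (lam * ∫ t in (1 : ℝ)..x, V a t / P t ε)

/-!
In quasi-homogeneous polar coordinates `s = τ^ν sin θ`, `ǫ = τ^μ cos θ` hypotheses (H1) and (H2)
say that `𝒬(s, ǫ)` is `τ^(μν)` times a function bounded below by a positive constant, so that
`𝒬(s, ǫ) ≥ c s^μ` for small `s > 0` and `ǫ ≥ 0`.

In the coordinate `s = x - ϑ_ε` the fundamental solution satisfies `Θ_λ D = W D` with
`W = V_a / 𝒬 → +∞` as `s → 0⁺`, uniformly in the parameters. Hence `D` vanishes faster than every
power of `s`. The lower bound on `𝒬` also shows that `W` and all its derivatives grow at most like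
negative powers of `s`, and therefore `Θ_λ^r (s^(-ℓ) D) = g_r D` with `g_r` of the same moderate
growth: the flat factor wins.

Uniformity in the parameters, together with the choice of `ε₀`, is expressed by limits along product
filters `l ×ˢ 𝓝[>] 0`, where `l` is `𝓝[≥] 0 ×ˢ 𝓟 (K ×ˢ [λ₀, ∞))` in the end.
-/

open Asymptotics
open scoped ContDiff

section UniformGerms

variable {ι : Type*} {l : Filter ι}

theorem exists_Ioc_of_eventually_prod_nhdsGT {p : ι → ℝ → Prop}
    (h : ∀ᶠ z in l ×ˢ 𝓝[>] (0 : ℝ), p z.1 z.2) {B : ℝ} (hB : 0 < B) :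
    ∃ b ∈ Ioc 0 B, ∀ᶠ i in l, ∀ s ∈ Ioc 0 b, p i s := by
  obtain ⟨pa, hpa, pb, hpb, hp⟩ := eventually_prod_iff.1 h
  obtain ⟨b, hb, hsub⟩ :=
    mem_nhdsGT_iff_exists_Ioc_subset.1 (inter_mem hpb (Ioc_mem_nhdsGT hB))
  exact ⟨b, ⟨hb, (hsub (right_mem_Ioc.2 hb)).2.2⟩, hpa.mono fun i hi s hs => hp hi (hsub hs).1⟩

theorem eventually_prod_nhdsGT_nhds {p : ι → ℝ → Prop}
    (h : ∀ᶠ z in l ×ˢ 𝓝[>] (0 : ℝ), p z.1 z.2) :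
    ∀ᶠ z in l ×ˢ 𝓝[>] (0 : ℝ), ∀ᶠ t in 𝓝 z.2, p z.1 t := by
  obtain ⟨b, hb, hl⟩ := exists_Ioc_of_eventually_prod_nhdsGT h one_pos
  filter_upwards [hl.prod_mk (Ioo_mem_nhdsGT hb.1)] with z hz
  filter_upwards [isOpen_Ioo.mem_nhds hz.2] with t ht using hz.1 t ⟨ht.1, ht.2.le⟩

theorem eventually_prod_nhdsGT_snd_pos : ∀ᶠ z in l ×ˢ 𝓝[>] (0 : ℝ), 0 < z.2 :=
  tendsto_snd.eventually self_mem_nhdsWithin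

theorem tendsto_snd_prod_nhdsGT : Tendsto (fun z : ι × ℝ => z.2) (l ×ˢ 𝓝[>] 0) (𝓝 0) :=
  tendsto_snd.mono_right nhdsWithin_le_nhds

theorem isBigO_inv_pow_of_le {M N : ℕ} (h : M ≤ N) :
    (fun z : ι × ℝ => (z.2 ^ M)⁻¹) =O[l ×ˢ 𝓝[>] 0] fun z => (z.2 ^ N)⁻¹ := by
  refine .of_bound 1 ?_
  filter_upwards [eventually_prod_nhdsGT_snd_pos,
    tendsto_snd_prod_nhdsGT.eventually_le_const one_pos] with z hz hz1
  rw [one_mul, norm_of_nonneg (by positivity), norm_of_nonneg (by positivity)]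
  exact inv_anti₀ (by positivity) (pow_le_pow_of_le_one hz.le hz1 h)

end UniformGerms

section ModerateGrowth

variable {ι : Type*} {l : Filter ι} {f g : ι → ℝ → ℝ} {n : ℕ}

/-- A family of functions of `s > 0` grows at most like a power of `1/s` as `s → 0⁺`, uniformly
for the parameter `i` along the filter `l`. -/
def ModerateGrowth (l : Filter ι) (f : ι → ℝ → ℝ) : Prop :=
  ∃ M : ℕ, (fun z : ι × ℝ => f z.1 z.2) =O[l ×ˢ 𝓝[>] 0] fun z => (z.2 ^ M)⁻¹

/-- The first `n` derivatives of the family exist near `s = 0⁺` and, like the family itself, have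
moderate growth. The derivatives are given as witnesses, so that no junk value of `deriv`
intervenes. -/
def ModerateDerivs (l : Filter ι) : ℕ → (ι → ℝ → ℝ) → Prop
  | 0, f => ModerateGrowth l f
  | n + 1, f => ModerateGrowth l f ∧ ∃ f' : ι → ℝ → ℝ,
      (∀ᶠ z in l ×ˢ 𝓝[>] (0 : ℝ), HasDerivAt (f z.1) (f' z.1 z.2) z.2) ∧ ModerateDerivs l n f'

theorem ModerateGrowth.add (hf : ModerateGrowth l f) (hg : ModerateGrowth l g) :
    ModerateGrowth l fun i s => f i s + g i s := by
  obtain ⟨M, hM⟩ := hf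
  obtain ⟨N, hN⟩ := hg
  exact ⟨max M N, (hM.trans (isBigO_inv_pow_of_le (le_max_left M N))).add
    (hN.trans (isBigO_inv_pow_of_le (le_max_right M N)))⟩

theorem ModerateGrowth.mul (hf : ModerateGrowth l f) (hg : ModerateGrowth l g) :
    ModerateGrowth l fun i s => f i s * g i s := by
  obtain ⟨M, hM⟩ := hf
  obtain ⟨N, hN⟩ := hg
  refine ⟨M + N, (hM.mul hN).congr_right fun z => ?_⟩
  rw [pow_add, mul_inv]

theorem ModerateGrowth.of_isBigO_one
    (hf : (fun z : ι × ℝ => f z.1 z.2) =O[l ×ˢ 𝓝[>] 0] fun _ => (1 : ℝ)) : ModerateGrowth l f :=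
  ⟨0, by simpa using hf⟩

theorem ModerateGrowth.inv_of_mul_pow_le {c : ℝ} {M : ℕ} (hc : 0 < c)
    (h : ∀ᶠ z in l ×ˢ 𝓝[>] (0 : ℝ), c * z.2 ^ M ≤ f z.1 z.2) :
    ModerateGrowth l fun i s => (f i s)⁻¹ := by
  refine ⟨M, .of_bound c⁻¹ ?_⟩
  filter_upwards [h, eventually_prod_nhdsGT_snd_pos] with z hz hs
  have hlow : 0 < c * z.2 ^ M := by positivity
  rw [norm_of_nonneg (inv_nonneg.2 (hlow.le.trans hz)), norm_of_nonneg (by positivity), ← mul_inv]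
  exact inv_anti₀ hlow hz

namespace ModerateDerivs

theorem of_succ (h : ModerateDerivs l (n + 1) f) : ModerateDerivs l n f := by
  induction n generalizing f with
  | zero => exact h.1
  | succ n ih =>
    obtain ⟨hf, f', hderiv, hf'⟩ := h
    exact ⟨hf, f', hderiv, ih hf'⟩

theorem add (hf : ModerateDerivs l n f) (hg : ModerateDerivs l n g) :
    ModerateDerivs l n fun i s => f i s + g i s := by
  induction n generalizing f g with
  | zero => exact ModerateGrowth.add hf hg
  | succ n ih =>
    obtain ⟨hf, f', hderivf, hf'⟩ := hf
    obtain ⟨hg, g', hderivg, hg'⟩ := hg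
    refine ⟨hf.add hg, fun i s => f' i s + g' i s, ?_, ih hf' hg'⟩
    filter_upwards [hderivf, hderivg] with z hzf hzg using hzf.add hzg

theorem mul (hf : ModerateDerivs l n f) (hg : ModerateDerivs l n g) :
    ModerateDerivs l n fun i s => f i s * g i s := by
  induction n generalizing f g with
  | zero => exact ModerateGrowth.mul hf hg
  | succ n ih =>
    have hfn := hf.of_succ
    have hgn := hg.of_succ
    obtain ⟨hf, f', hderivf, hf'⟩ := hf
    obtain ⟨hg, g', hderivg, hg'⟩ := hg
    refine ⟨hf.mul hg, fun i s => f' i s * g i s + f i s * g' i s, ?_,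
      (ih hf' hgn).add (ih hfn hg')⟩
    filter_upwards [hderivf, hderivg] with z hzf hzg using hzf.mul hzg

theorem const {c : ι → ℝ} (hc : c =O[l] fun _ => (1 : ℝ)) :
    ModerateDerivs l n fun i _ => c i := by
  have hbound {c : ι → ℝ} (hc : c =O[l] fun _ => (1 : ℝ)) : ModerateGrowth l fun i _ => c i :=
    .of_isBigO_one (hc.comp_tendsto tendsto_fst)
  induction n generalizing c with
  | zero => exact hbound hc
  | succ n ih =>
    exact ⟨hbound hc, fun _ _ => 0, .of_forall fun z => hasDerivAt_const z.2 (c z.1),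
      ih (isBigO_zero _ _)⟩

theorem inv (hf : ModerateDerivs l n f) (hne : ∀ᶠ z in l ×ˢ 𝓝[>] (0 : ℝ), f z.1 z.2 ≠ 0)
    (hinv : ModerateGrowth l fun i s => (f i s)⁻¹) :
    ModerateDerivs l n fun i s => (f i s)⁻¹ := by
  induction n with
  | zero => exact hinv
  | succ n ih =>
    have hinv' := ih hf.of_succ
    obtain ⟨-, f', hderiv, hf'⟩ := hf
    refine ⟨hinv, fun i s => -1 * f' i s * ((f i s)⁻¹ * (f i s)⁻¹), ?_,
      ((const (isBigO_const_const (-1) one_ne_zero l)).mul hf').mul (hinv'.mul hinv')⟩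
    filter_upwards [hderiv, hne] with z hz hz0
    refine (hz.inv hz0).congr_deriv ?_
    field_simp

theorem inv_of_mul_pow_le {c : ℝ} {M : ℕ} (hf : ModerateDerivs l n f) (hc : 0 < c)
    (h : ∀ᶠ z in l ×ˢ 𝓝[>] (0 : ℝ), c * z.2 ^ M ≤ f z.1 z.2) :
    ModerateDerivs l n fun i s => (f i s)⁻¹ := by
  refine hf.inv ?_ (.inv_of_mul_pow_le hc h)
  filter_upwards [h, eventually_prod_nhdsGT_snd_pos] with z hz hs
  exact (lt_of_lt_of_le (by positivity) hz).ne'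

end ModerateDerivs

end ModerateGrowth

section SmoothFamilies

variable {ι X : Type*} {l : Filter ι}

theorem isBigO_one_nhdsSet [TopologicalSpace X] {L : Set X} (hL : IsCompact L) {G : X → ℝ}
    (hG : ∀ x ∈ L, ContinuousAt G x) : G =O[𝓝ˢ L] fun _ => (1 : ℝ) := by
  obtain ⟨C, hC⟩ := hL.exists_bound_of_continuousOn fun x hx => (hG x hx).continuousWithinAt
  refine .of_bound (C + 1) (eventually_nhdsSet_iff_forall.2 fun x hx => ?_)
  have hlt : ‖G x‖ < C + 1 := (hC x hx).trans_lt (lt_add_one C)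
  filter_upwards [(hG x hx).norm.eventually_lt_const hlt] with x' hx'
  simpa using hx'.le

theorem exists_pos_eventually_nhdsSet_le [TopologicalSpace X] {L : Set X} (hL : IsCompact L)
    {G : X → ℝ} (hG : ∀ x ∈ L, ContinuousAt G x) (hpos : ∀ x ∈ L, 0 < G x) :
    ∃ m > 0, ∀ᶠ x in 𝓝ˢ L, m ≤ G x := by
  obtain ⟨m, hm, hle⟩ :=
    hL.exists_forall_le' (fun x hx => (hG x hx).continuousWithinAt) hpos
  refine ⟨m / 2, half_pos hm, eventually_nhdsSet_iff_forall.2 fun x hx => ?_⟩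
  exact (hG x hx).eventually_const_le ((half_lt_self hm).trans_le (hle x hx))

variable [NormedAddCommGroup X] [NormedSpace ℝ X] {L : Set X} {y : ι → X} {n : ℕ}

theorem tendsto_add_smul_nhdsSet (hL : IsCompact L) (hy : Tendsto y l (𝓝ˢ L)) (w : X) :
    Tendsto (fun z : ι × ℝ => y z.1 + z.2 • w) (l ×ˢ 𝓝[>] 0) (𝓝ˢ L) := by
  have hcont : Continuous fun z : X × ℝ => z.1 + z.2 • w := by fun_prop
  have hmaps : MapsTo (fun z : X × ℝ => z.1 + z.2 • w) (L ×ˢ {0}) L := by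
    rintro ⟨x, s⟩ ⟨hx, rfl : s = 0⟩
    simpa using hx
  have hprod := hcont.tendsto_nhdsSet hmaps
  rw [hL.nhdsSet_prod_eq isCompact_singleton, nhdsSet_singleton] at hprod
  exact hprod.comp (hy.prodMap (tendsto_id.mono_left nhdsWithin_le_nhds))

theorem ModerateDerivs.comp_add_smul (hL : IsCompact L) (hy : Tendsto y l (𝓝ˢ L)) (w : X)
    {G : X → ℝ} (hG : ∀ x ∈ L, ContDiffAt ℝ n G x) :
    ModerateDerivs l n fun i s => G (y i + s • w) := by
  have hline := tendsto_add_smul_nhdsSet hL hy w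
  have hbound {G : X → ℝ} (hG : ∀ x ∈ L, ContinuousAt G x) :
      ModerateGrowth l fun i s => G (y i + s • w) :=
    .of_isBigO_one ((isBigO_one_nhdsSet hL hG).comp_tendsto hline)
  induction n generalizing G with
  | zero => exact hbound fun x hx => (hG x hx).continuousAt
  | succ n ih =>
    have hdiff : ∀ᶠ x in 𝓝ˢ L, DifferentiableAt ℝ G x :=
      eventually_nhdsSet_iff_forall.2 fun x hx =>
        ((hG x hx).eventually (by simp)).mono fun x' hx' => hx'.differentiableAt (by simp)
    refine ⟨hbound fun x hx => (hG x hx).continuousAt,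
      fun i s => fderiv ℝ G (y i + s • w) w, ?_, ih (G := fun x => fderiv ℝ G x w) fun x hx => ?_⟩
    · filter_upwards [hline.eventually hdiff] with z hz
      have hderiv : HasDerivAt (fun s : ℝ => y z.1 + s • w) w z.2 := by
        simpa using ((hasDerivAt_id z.2).smul_const w).const_add (y z.1)
      exact hz.hasFDerivAt.comp_hasDerivAt z.2 hderiv
    · exact ((hG x hx).fderiv_right (by norm_cast)).clm_apply contDiffAt_const

theorem ModerateDerivs.of_contDiffAt {G : ℝ → ℝ} (hG : ContDiffAt ℝ n G 0) :
    ModerateDerivs l n fun _ s => G s := by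
  have hconst : Tendsto (fun _ : ι => (0 : ℝ)) l (𝓝ˢ {0}) := by
    simpa only [nhdsSet_singleton] using tendsto_const_nhds
  simpa using comp_add_smul (G := G) isCompact_singleton hconst 1 (by simpa using hG)

end SmoothFamilies

section FundamentalSolution

theorem hasDerivAt_integral_of_continuousOn_Ioc {f : ℝ → ℝ} {θ c x : ℝ}
    (hf : ContinuousOn f (Ioc θ c)) (hx : x ∈ Ioo θ c) :
    HasDerivAt (fun x => ∫ t in c..x, f t) (f x) x := by
  have hfo : ContinuousOn f (Ioo θ c) := hf.mono Ioo_subset_Ioc_self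
  refine integral_hasDerivAt_right (ContinuousOn.intervalIntegrable (hf.mono ?_))
    (hfo.stronglyMeasurableAtFilter isOpen_Ioo x hx) (hfo.continuousAt (isOpen_Ioo.mem_nhds hx))
  rw [uIcc_of_ge hx.2.le]
  exact fun y hy => ⟨hx.1.trans_le hy.1, hy.2⟩

theorem integral_le_mul_log {f : ℝ → ℝ} {θ b c κ : ℝ} (hf : ContinuousOn f (Ioc θ c))
    (hf0 : ∀ x ∈ Ioc θ c, 0 ≤ f x) (hb : 0 < b) (hbc : b + θ < c)
    (hκ : ∀ s ∈ Ioc 0 b, κ ≤ s * f (s + θ)) {s : ℝ} (hs : s ∈ Ioc 0 b) :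
    ∫ t in c..s + θ, f t ≤ κ * log (s / b) := by
  have hderiv : ∀ s ∈ Ioc 0 b, HasDerivAt (fun s => (∫ t in c..s + θ, f t) - κ * log s)
      (f (s + θ) - κ * s⁻¹) s := by
    intro s hs
    have hint := hasDerivAt_integral_of_continuousOn_Ioc hf (x := s + θ)
      ⟨by linarith [hs.1], by linarith [hs.2]⟩
    exact (hint.comp_add_const s θ).sub ((hasDerivAt_log hs.1.ne').const_mul κ)
  have hmono : MonotoneOn (fun s => (∫ t in c..s + θ, f t) - κ * log s) (Ioc 0 b) := by
    refine monotoneOn_of_deriv_nonneg (convex_Ioc 0 b)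
      (fun s hs => (hderiv s hs).continuousAt.continuousWithinAt)
      (fun s hs => (hderiv s (interior_subset hs)).differentiableAt.differentiableWithinAt)
      fun s hs => ?_
    have hs' := interior_subset hs
    rw [(hderiv s hs').deriv, sub_nonneg, ← div_eq_mul_inv, div_le_iff₀' hs'.1]
    exact hκ s hs'
  have hle : (∫ t in c..s + θ, f t) - κ * log s ≤ (∫ t in c..b + θ, f t) - κ * log b :=
    hmono hs (right_mem_Ioc.2 hb) hs.2
  have hend : ∫ t in c..b + θ, f t ≤ 0 := by
    rw [integral_symm, neg_nonpos]
    exact integral_nonneg hbc.le fun u hu => hf0 u ⟨by linarith [hu.1], hu.2⟩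
  rw [log_div hs.1.ne' hb.ne']
  linarith

variable {ι : Type*} {l : Filter ι} {f : ι → ℝ → ℝ} {θ lam : ι → ℝ} {i : ι} {lam₀ s : ℝ}

/-- The solution of `dy/dx = λᵢ fᵢ(x) y` with value `1` at `x = 1`, in the coordinate
`s = x - θᵢ`. For `f = V/P` and `θ` the biggest root of `P` it is `D(s + θ)`. -/
def fundSol (f : ι → ℝ → ℝ) (θ lam : ι → ℝ) (i : ι) (s : ℝ) : ℝ :=
  exp (lam i * ∫ t in (1 : ℝ)..s + θ i, f i t)

theorem fundSol_nonneg : 0 ≤ fundSol f θ lam i s := exp_nonneg _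

theorem hasDerivAt_fundSol (hf : ContinuousOn (f i) (Ioc (θ i) 1)) (hs : s + θ i ∈ Ioo (θ i) 1) :
    HasDerivAt (fundSol f θ lam i) (lam i * f i (s + θ i) * fundSol f θ lam i s) s := by
  have hint := hasDerivAt_integral_of_continuousOn_Ioc hf hs
  exact ((hint.comp_add_const s (θ i)).const_mul (lam i)).exp.congr_deriv (mul_comm _ _)

theorem eventually_hasDerivAt_fundSol (hθ : Tendsto θ l (𝓝 0))
    (hf : ∀ᶠ i in l, ContinuousOn (f i) (Ioc (θ i) 1)) :
    ∀ᶠ z in l ×ˢ 𝓝[>] (0 : ℝ), HasDerivAt (fundSol f θ lam z.1)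
      (lam z.1 * f z.1 (z.2 + θ z.1) * fundSol f θ lam z.1 z.2) z.2 := by
  have hlt : ∀ᶠ z in l ×ˢ 𝓝[>] (0 : ℝ), z.2 + θ z.1 < 1 := by
    have hsum := tendsto_snd_prod_nhdsGT.add (hθ.comp tendsto_fst)
    rw [add_zero] at hsum
    exact hsum.eventually_lt_const one_pos
  filter_upwards [tendsto_fst.eventually hf, eventually_prod_nhdsGT_snd_pos, hlt] with z hz hz0 hz1
  exact hasDerivAt_fundSol hz ⟨lt_add_of_pos_left _ hz0, hz1⟩

theorem fundSol_le_div_pow {b : ℝ} {N : ℕ} (hf : ContinuousOn (f i) (Ioc (θ i) 1))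
    (hf0 : ∀ x ∈ Ioc (θ i) 1, 0 ≤ f i x) (hlam₀ : 0 < lam₀) (hlam : lam₀ ≤ lam i)
    (hb : 0 < b) (hbθ : b + θ i < 1) (hN : ∀ s ∈ Ioc 0 b, N / lam₀ ≤ s * f i (s + θ i))
    (hs : s ∈ Ioc 0 b) : fundSol f θ lam i s ≤ (s / b) ^ N := by
  have hsb : 0 < s / b := div_pos hs.1 hb
  have hlog : N / lam₀ * log (s / b) ≤ 0 :=
    mul_nonpos_of_nonneg_of_nonpos (by positivity) (log_nonpos hsb.le ((div_le_one hb).2 hs.2))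
  have hint := integral_le_mul_log hf hf0 hb hbθ hN hs
  calc fundSol f θ lam i s ≤ exp (N * log (s / b)) := ?_
    _ = (s / b) ^ N := by rw [exp_nat_mul, exp_log hsb]
  refine exp_le_exp.2 ?_
  calc lam i * ∫ t in (1 : ℝ)..s + θ i, f i t
      ≤ lam i * (N / lam₀ * log (s / b)) :=
        mul_le_mul_of_nonneg_left hint (hlam₀.trans_le hlam).le
    _ ≤ lam₀ * (N / lam₀ * log (s / b)) := mul_le_mul_of_nonpos_right hlam hlog
    _ = N * log (s / b) := by field_simp

theorem fundSol_isBigO_pow (hθ : Tendsto θ l (𝓝 0))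
    (hf : ∀ᶠ i in l, ContinuousOn (f i) (Ioc (θ i) 1))
    (hf0 : ∀ᶠ i in l, ∀ x ∈ Ioc (θ i) 1, 0 ≤ f i x)
    (hlam₀ : 0 < lam₀) (hlam : ∀ᶠ i in l, lam₀ ≤ lam i)
    (hpole : Tendsto (fun z : ι × ℝ => z.2 * f z.1 (z.2 + θ z.1)) (l ×ˢ 𝓝[>] 0) atTop) (N : ℕ) :
    (fun z : ι × ℝ => fundSol f θ lam z.1 z.2) =O[l ×ˢ 𝓝[>] 0] fun z => z.2 ^ N := by
  obtain ⟨b, ⟨hb, hb2⟩, hbl⟩ := exists_Ioc_of_eventually_prod_nhdsGT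
    (p := fun i s => N / lam₀ ≤ s * f i (s + θ i)) (hpole.eventually_ge_atTop _) one_half_pos
  have hθ2 : ∀ᶠ i in l, θ i < 1 / 2 := hθ.eventually_lt_const one_half_pos
  have hi : ∀ᶠ i in l, ∀ s ∈ Ioc 0 b, fundSol f θ lam i s ≤ (s / b) ^ N := by
    filter_upwards [hf, hf0, hlam, hbl, hθ2] with i hf hf0 hlam hbl hθ2 s hs
    exact fundSol_le_div_pow hf hf0 hlam₀ hlam hb (by linarith) hbl hs
  refine .of_bound (b ^ N)⁻¹ ?_
  filter_upwards [hi.prod_mk (Ioc_mem_nhdsGT hb)] with z hz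
  have hz0 : 0 < z.2 := hz.2.1
  rw [norm_of_nonneg fundSol_nonneg, norm_of_nonneg (by positivity), inv_mul_eq_div, ← div_pow]
  exact hz.1 z.2 hz.2

end FundamentalSolution

section IteratedTheta

variable {ι : Type*} {l : Filter ι} {lam : ι → ℝ} {lam₀ : ℝ}

theorem theta_congr {lam s : ℝ} {F G : ℝ → ℝ} (h : F =ᶠ[𝓝 s] G) :
    Theta lam F s = Theta lam G s := by
  simp only [Theta, h.deriv_eq]

theorem theta_mul {lam w g' s : ℝ} {D g : ℝ → ℝ} (hlam : lam ≠ 0) (hs : s ≠ 0)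
    (hD : HasDerivAt D (lam * (w / s) * D s) s) (hg : HasDerivAt g g' s) :
    Theta lam (fun t => D t * g t) s = D s * (w * g s + lam⁻¹ * (s * g')) := by
  have hDg : HasDerivAt (fun t => D t * g t) _ s := hD.mul hg
  rw [Theta, hDg.deriv]
  field_simp

theorem isBigO_inv_one_of_le (hlam₀ : 0 < lam₀) (hlam : ∀ᶠ i in l, lam₀ ≤ lam i) :
    (fun i => (lam i)⁻¹) =O[l] fun _ => (1 : ℝ) := by
  refine .of_bound lam₀⁻¹ ?_
  filter_upwards [hlam] with i hi
  rw [norm_one, mul_one, norm_of_nonneg (inv_nonneg.2 (hlam₀.le.trans hi))]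
  exact inv_anti₀ hlam₀ hi

-- Since `Θ_λ D = W D`, we have `Θ_λ (D g) = D (W g + Θ_λ g)`.
theorem exists_iterate_theta_eq_mul {D W g₀ : ι → ℝ → ℝ}
    (hlam₀ : 0 < lam₀) (hlam : ∀ᶠ i in l, lam₀ ≤ lam i)
    (hD : ∀ᶠ z in l ×ˢ 𝓝[>] (0 : ℝ),
      HasDerivAt (D z.1) (lam z.1 * (W z.1 z.2 / z.2) * D z.1 z.2) z.2)
    (hW : ∀ n, ModerateDerivs l n W) (hg₀ : ∀ n, ModerateDerivs l n g₀) (r n : ℕ) :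
    ∃ g, ModerateDerivs l n g ∧ ∀ᶠ z in l ×ˢ 𝓝[>] (0 : ℝ),
      (Theta (lam z.1))^[r] (fun t => D z.1 t * g₀ z.1 t) z.2 = D z.1 z.2 * g z.1 z.2 := by
  induction r generalizing n with
  | zero => exact ⟨g₀, hg₀ n, .of_forall fun _ => rfl⟩
  | succ r ih =>
    obtain ⟨g, hg, heq⟩ := ih (n + 1)
    have hgn := hg.of_succ
    obtain ⟨-, g', hderiv, hg'⟩ := hg
    have hid : ModerateDerivs l n fun _ s => s := .of_contDiffAt contDiffAt_id
    refine ⟨fun i s => W i s * g i s + (lam i)⁻¹ * (s * g' i s), ((hW n).mul hgn).add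
      ((ModerateDerivs.const (isBigO_inv_one_of_le hlam₀ hlam)).mul (hid.mul hg')), ?_⟩
    have heq_nhds := eventually_prod_nhdsGT_nhds
      (p := fun i s => (Theta (lam i))^[r] (fun t => D i t * g₀ i t) s = D i s * g i s) heq
    filter_upwards [heq_nhds, hD, hderiv, tendsto_fst.eventually hlam,
      eventually_prod_nhdsGT_snd_pos] with z hz hzD hzg hzlam hz0
    rw [Function.iterate_succ_apply', theta_congr hz]
    exact theta_mul (hlam₀.trans_le hzlam).ne' hz0.ne' hzD hzg

theorem iterate_theta_fundSol_div_pow_isBigO {f W : ι → ℝ → ℝ} {θ : ι → ℝ}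
    (hθ : Tendsto θ l (𝓝 0)) (hf : ∀ᶠ i in l, ContinuousOn (f i) (Ioc (θ i) 1))
    (hf0 : ∀ᶠ i in l, ∀ x ∈ Ioc (θ i) 1, 0 ≤ f i x)
    (hlam₀ : 0 < lam₀) (hlam : ∀ᶠ i in l, lam₀ ≤ lam i)
    (hfW : ∀ᶠ z in l ×ˢ 𝓝[>] (0 : ℝ), f z.1 (z.2 + θ z.1) = W z.1 z.2 / z.2)
    (hW : ∀ n, ModerateDerivs l n W)
    (hWtop : Tendsto (fun z : ι × ℝ => W z.1 z.2) (l ×ˢ 𝓝[>] 0) atTop) (ℓ r : ℕ) :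
    (fun z : ι × ℝ => (Theta (lam z.1))^[r] (fun t => fundSol f θ lam z.1 t / t ^ ℓ) z.2)
      =O[l ×ˢ 𝓝[>] 0] fun z => z.2 := by
  have hderiv : ∀ᶠ z in l ×ˢ 𝓝[>] (0 : ℝ), HasDerivAt (fundSol f θ lam z.1)
      (lam z.1 * (W z.1 z.2 / z.2) * fundSol f θ lam z.1 z.2) z.2 := by
    filter_upwards [eventually_hasDerivAt_fundSol hθ hf, hfW] with z hz hzW
    rwa [← hzW]
  have hpow (n : ℕ) : ModerateDerivs l n fun _ s => (s ^ ℓ)⁻¹ :=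
    (ModerateDerivs.of_contDiffAt (contDiffAt_id.pow ℓ)).inv_of_mul_pow_le one_pos
      (M := ℓ) (.of_forall fun z => (one_mul _).le)
  obtain ⟨g, ⟨M, hg⟩, heq⟩ := exists_iterate_theta_eq_mul hlam₀ hlam hderiv hW hpow r 0
  have hpole : Tendsto (fun z : ι × ℝ => z.2 * f z.1 (z.2 + θ z.1)) (l ×ˢ 𝓝[>] 0) atTop := by
    refine hWtop.congr' ?_
    filter_upwards [hfW, eventually_prod_nhdsGT_snd_pos] with z hz hz0
    rw [hz, mul_div_cancel₀ _ hz0.ne']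
  have hflat := fundSol_isBigO_pow hθ hf hf0 hlam₀ hlam hpole (M + 1)
  refine (hflat.mul hg).congr' ?_ ?_
  · filter_upwards [heq] with z hz
    simp only [div_eq_mul_inv, hz]
  · filter_upwards [eventually_prod_nhdsGT_snd_pos] with z hz
    rw [pow_succ', mul_inv_cancel_right₀ (pow_pos hz M).ne']

end IteratedTheta

section NewtonPolygon

/-- The quasi-homogeneous principal part `∑_{i/μ + j/ν = 1} q_{ij} u^i v^j` of a double power
series, carried by the side of its Newton polygon joining `(μ, 0)` to `(0, ν)`. The rectangle
`i ≤ μ`, `j ≤ ν` contains every exponent on that side as soon as `μ` and `ν` are positive. -/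
def principalPart (μ ν : ℕ) (q : ℕ → ℕ → ℝ) (u v : ℝ) : ℝ :=
  ∑ i ∈ Finset.range (μ + 1), ∑ j ∈ Finset.range (ν + 1),
    if (i : ℝ) / μ + (j : ℝ) / ν = 1 then q i j * u ^ i * v ^ j else 0

variable {μ ν : ℕ}

theorem div_add_div_eq_one_iff_natCast (hμ : 0 < μ) (hν : 0 < ν) (i j : ℕ) :
    (i : ℝ) / μ + (j : ℝ) / ν = 1 ↔ ν * i + μ * j = μ * ν := by
  rw [div_add_div _ _ (by positivity) (by positivity), div_eq_one_iff_eq (by positivity),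
    mul_comm (i : ℝ)]
  norm_cast

theorem one_le_div_add_div_iff_natCast (hμ : 0 < μ) (hν : 0 < ν) (i j : ℕ) :
    1 ≤ (i : ℝ) / μ + (j : ℝ) / ν ↔ μ * ν ≤ ν * i + μ * j := by
  rw [div_add_div _ _ (by positivity) (by positivity), one_le_div (by positivity),
    mul_comm (i : ℝ)]
  norm_cast

variable {q : ℕ → ℕ → ℝ} {Q : ℝ → ℝ → ℝ}

theorem continuous_principalPart :
    Continuous fun z : ℝ × ℝ => principalPart μ ν q z.1 z.2 := by
  refine continuous_finsetSum _ fun i _ => continuous_finsetSum _ fun j _ => ?_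
  split_ifs <;> fun_prop

theorem hasSum_principalPart (hμ : 0 < μ) (hν : 0 < ν) (q : ℕ → ℕ → ℝ) (u v : ℝ) :
    HasSum (fun ij : ℕ × ℕ => if (ij.1 : ℝ) / μ + (ij.2 : ℝ) / ν = 1 then
      q ij.1 ij.2 * u ^ ij.1 * v ^ ij.2 else 0) (principalPart μ ν q u v) := by
  rw [principalPart, ← Finset.sum_product']
  refine hasSum_sum_of_ne_finset_zero fun ⟨i, j⟩ hij => if_neg fun hline => hij ?_
  rw [div_add_div_eq_one_iff_natCast hμ hν] at hline
  have hi : ν * i ≤ ν * μ := by linarith [Nat.zero_le (μ * j), mul_comm μ ν]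
  have hj : μ * j ≤ μ * ν := by linarith [Nat.zero_le (ν * i)]
  exact Finset.mem_product.2 ⟨Finset.mem_range_succ_iff.2 (le_of_mul_le_mul_left hi hν),
    Finset.mem_range_succ_iff.2 (le_of_mul_le_mul_left hj hμ)⟩

theorem exists_forall_quasihomogeneous_of_eventually (hμ : 0 < μ) (hν : 0 < ν)
    {p : ℝ × ℝ → Prop} (hp : ∀ᶠ z in 𝓝 (0, 0), p z) :
    ∃ t > 0, ∀ τ ∈ Ioc 0 t, ∀ u ∈ Icc (0 : ℝ) 1, ∀ v ∈ Icc (0 : ℝ) 1,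
      p (τ ^ ν * u, τ ^ μ * v) := by
  have hτ : ∀ᶠ τ : ℝ in 𝓝 0, ∀ w ∈ Icc (0 : ℝ) 1 ×ˢ Icc (0 : ℝ) 1,
      p (τ ^ ν * w.1, τ ^ μ * w.2) := by
    refine (isCompact_Icc.prod isCompact_Icc).eventually_forall_of_forall_eventually fun w _ => ?_
    have hcont : Continuous fun z : ℝ × ℝ × ℝ => (z.1 ^ ν * z.2.1, z.1 ^ μ * z.2.2) := by fun_prop
    exact (hcont.tendsto' (0, w) (0, 0) (by simp [hμ.ne', hν.ne'])).eventually hp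
  obtain ⟨t, ht, hsub⟩ := mem_nhdsGT_iff_exists_Ioc_subset.1 (hτ.filter_mono nhdsWithin_le_nhds)
  exact ⟨t, ht, fun τ hτ u hu v hv => hsub hτ (u, v) ⟨hu, hv⟩⟩

-- The terms on the side of the Newton polygon cancel; the others have weight at least `μν + 1`.
theorem abs_term_sub_principal_le (hμ : 0 < μ) (hν : 0 < ν) {i j : ℕ} {b τ t u v : ℝ}
    (hb : b ≠ 0 → 1 ≤ (i : ℝ) / μ + (j : ℝ) / ν) (hτ : τ ∈ Ioc 0 t)
    (hu : u ∈ Icc (0 : ℝ) 1) (hv : v ∈ Icc (0 : ℝ) 1) :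
    |b * (τ ^ ν * u) ^ i * (τ ^ μ * v) ^ j - τ ^ (μ * ν) *
        (if (i : ℝ) / μ + (j : ℝ) / ν = 1 then b * u ^ i * v ^ j else 0)| ≤
      (τ / t) ^ (μ * ν + 1) * |b * (t ^ ν) ^ i * (t ^ μ) ^ j| := by
  have hτ0 : 0 < τ := hτ.1
  have ht : 0 < t := hτ0.trans_le hτ.2
  obtain ⟨hu0, hu1⟩ := hu
  obtain ⟨hv0, hv1⟩ := hv
  have hmonomial : (τ ^ ν * u) ^ i * (τ ^ μ * v) ^ j = τ ^ (ν * i + μ * j) * (u ^ i * v ^ j) := by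
    ring
  rw [mul_assoc, mul_assoc b ((t ^ ν) ^ i), hmonomial, ← pow_mul, ← pow_mul, ← pow_add]
  rcases eq_or_ne b 0 with rfl | hb0
  · simp
  split_ifs with hline
  · rw [(div_add_div_eq_one_iff_natCast hμ hν i j).1 hline, mul_left_comm, mul_assoc b, sub_self,
      abs_zero]
    positivity
  have hweight : μ * ν + 1 ≤ ν * i + μ * j :=
    lt_of_le_of_ne ((one_le_div_add_div_iff_natCast hμ hν i j).1 (hb hb0))
      fun h => hline ((div_add_div_eq_one_iff_natCast hμ hν i j).2 h.symm)
  have huv : u ^ i * v ^ j ≤ 1 :=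
    mul_le_one₀ (pow_le_one₀ hu0 hu1) (by positivity) (pow_le_one₀ hv0 hv1)
  rw [mul_zero, sub_zero, abs_mul b, abs_mul b,
    abs_of_nonneg (show 0 ≤ τ ^ (ν * i + μ * j) * (u ^ i * v ^ j) by positivity),
    abs_of_pos (show 0 < t ^ (ν * i + μ * j) by positivity)]
  calc |b| * (τ ^ (ν * i + μ * j) * (u ^ i * v ^ j))
      ≤ |b| * (τ ^ (ν * i + μ * j) * 1) := by gcongr
    _ = (τ / t) ^ (ν * i + μ * j) * (|b| * t ^ (ν * i + μ * j)) := by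
      rw [div_pow]
      field_simp
    _ ≤ (τ / t) ^ (μ * ν + 1) * (|b| * t ^ (ν * i + μ * j)) := by
      gcongr ?_ * _
      exact pow_le_pow_of_le_one (by positivity) ((div_le_one ht).2 hτ.2) hweight

theorem exists_abs_sub_principalPart_le (hμ : 0 < μ) (hν : 0 < ν)
    (hsum : ∀ᶠ z : ℝ × ℝ in 𝓝 (0, 0),
      HasSum (fun ij : ℕ × ℕ => q ij.1 ij.2 * z.1 ^ ij.1 * z.2 ^ ij.2) (Q z.1 z.2))
    (hq : ∀ i j : ℕ, q i j ≠ 0 → 1 ≤ (i : ℝ) / μ + (j : ℝ) / ν) :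
    ∃ t > 0, ∃ B, ∀ τ ∈ Ioc 0 t, ∀ u ∈ Icc (0 : ℝ) 1, ∀ v ∈ Icc (0 : ℝ) 1,
      |Q (τ ^ ν * u) (τ ^ μ * v) - τ ^ (μ * ν) * principalPart μ ν q u v| ≤
        B * τ ^ (μ * ν + 1) := by
  obtain ⟨t, ht, hsum⟩ := exists_forall_quasihomogeneous_of_eventually hμ hν hsum
  have hone : (1 : ℝ) ∈ Icc (0 : ℝ) 1 := by simp
  have hsummable : Summable fun ij : ℕ × ℕ =>
      |q ij.1 ij.2 * (t ^ ν) ^ ij.1 * (t ^ μ) ^ ij.2| := by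
    simpa only [mul_one] using (hsum t ⟨ht, le_rfl⟩ 1 hone 1 hone).summable.abs
  refine ⟨t, ht, (∑' ij : ℕ × ℕ, |q ij.1 ij.2 * (t ^ ν) ^ ij.1 * (t ^ μ) ^ ij.2|) /
    t ^ (μ * ν + 1), fun τ hτ u hu v hv => ?_⟩
  have hdiff := (hsum τ hτ u hu v hv).sub
    ((hasSum_principalPart hμ hν q u v).mul_left (τ ^ (μ * ν)))
  rw [div_mul_comm, ← div_pow, ← hdiff.tsum_eq, ← norm_eq_abs]
  exact tsum_of_norm_bounded (hsummable.hasSum.mul_left _) fun ij =>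
    abs_term_sub_principal_le hμ hν (hq ij.1 ij.2) hτ hu hv

theorem sin_mem_Icc_zero_one {θ : ℝ} (hθ : θ ∈ Icc 0 (π / 2)) : sin θ ∈ Icc (0 : ℝ) 1 :=
  ⟨sin_nonneg_of_nonneg_of_le_pi hθ.1 (by linarith [hθ.2, pi_pos]), sin_le_one θ⟩

theorem cos_mem_Icc_zero_one {θ : ℝ} (hθ : θ ∈ Icc 0 (π / 2)) : cos θ ∈ Icc (0 : ℝ) 1 :=
  ⟨cos_nonneg_of_mem_Icc ⟨by linarith [hθ.1, pi_pos], hθ.2⟩, cos_le_one θ⟩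

theorem exists_forall_mul_pow_le_quasipolar (hμ : 0 < μ) (hν : 0 < ν)
    (hsum : ∀ᶠ z : ℝ × ℝ in 𝓝 (0, 0),
      HasSum (fun ij : ℕ × ℕ => q ij.1 ij.2 * z.1 ^ ij.1 * z.2 ^ ij.2) (Q z.1 z.2))
    (hq : ∀ i j : ℕ, q i j ≠ 0 → 1 ≤ (i : ℝ) / μ + (j : ℝ) / ν)
    (hpos : ∀ θ ∈ Icc (0 : ℝ) (π / 2), 0 < principalPart μ ν q (sin θ) (cos θ)) :
    ∃ c > 0, ∃ T > 0, ∀ τ ∈ Ioc 0 T, ∀ θ ∈ Icc (0 : ℝ) (π / 2),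
      c * τ ^ (μ * ν) ≤ Q (τ ^ ν * sin θ) (τ ^ μ * cos θ) := by
  obtain ⟨m, hm, hmin⟩ := isCompact_Icc.exists_forall_le' (f := fun θ =>
    principalPart μ ν q (sin θ) (cos θ))
    (continuous_principalPart.comp (continuous_sin.prodMk continuous_cos)).continuousOn hpos
  obtain ⟨t, ht, B, hB⟩ := exists_abs_sub_principalPart_le hμ hν hsum hq
  have hsmall : ∀ᶠ τ : ℝ in 𝓝[>] 0, B * τ < m / 2 := by
    have hcont : Continuous fun τ : ℝ => B * τ := by fun_prop
    exact ((hcont.tendsto' 0 0 (mul_zero B)).mono_left nhdsWithin_le_nhds).eventually_lt_const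
      (half_pos hm)
  obtain ⟨T, hT, hsub⟩ := mem_nhdsGT_iff_exists_Ioc_subset.1 (hsmall.and (Ioc_mem_nhdsGT ht))
  refine ⟨m / 2, half_pos hm, T, hT, fun τ hτ θ hθ => ?_⟩
  obtain ⟨hBτ, hτt⟩ := hsub hτ
  have hrem := (abs_le.1
    (hB τ hτt _ (sin_mem_Icc_zero_one hθ) _ (cos_mem_Icc_zero_one hθ))).1
  have hτpow : 0 < τ ^ (μ * ν) := pow_pos hτ.1 _
  calc m / 2 * τ ^ (μ * ν) ≤ τ ^ (μ * ν) * m - B * τ * τ ^ (μ * ν) := by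
        linarith [mul_lt_mul_of_pos_right hBτ hτpow]
    _ ≤ τ ^ (μ * ν) * principalPart μ ν q (sin θ) (cos θ) - B * τ * τ ^ (μ * ν) := by
        gcongr
        exact hmin θ hθ
    _ ≤ Q (τ ^ ν * sin θ) (τ ^ μ * cos θ) := by
        rw [pow_succ'] at hrem
        linarith

theorem exists_ge_sq_add_sq_eq_one (hν : 0 < ν) {t₀ s e : ℝ} (ht₀ : 0 < t₀) (hs : 0 < s)
    (he : 0 ≤ e) (hs' : t₀ ^ ν * s ≤ 1 / 2) (he' : t₀ ^ μ * e ≤ 1 / 2) :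
    ∃ t ≥ t₀, (t ^ ν * s) ^ 2 + (t ^ μ * e) ^ 2 = 1 := by
  let f : ℝ → ℝ := fun t => (t ^ ν * s) ^ 2 + (t ^ μ * e) ^ 2
  have hf : Continuous f := by fun_prop
  have hlow : f t₀ ≤ 1 := by
    have hs2 := pow_le_pow_left₀ (by positivity) hs' 2
    have he2 := pow_le_pow_left₀ (by positivity) he' 2
    simp only [f]
    linarith
  have htop : Tendsto f atTop atTop := by
    refine tendsto_atTop_mono (fun t => le_add_of_nonneg_right (sq_nonneg _)) ?_
    exact (tendsto_pow_atTop two_ne_zero).comp ((tendsto_pow_atTop hν.ne').atTop_mul_const hs)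
  obtain ⟨b, hb, htb⟩ := ((htop.eventually_ge_atTop 1).and (eventually_ge_atTop t₀)).exists
  obtain ⟨t, ht, hft⟩ := intermediate_value_Icc htb hf.continuousOn ⟨hlow, hb⟩
  exact ⟨t, ht.1, hft⟩

theorem exists_angle_of_sq_add_sq_eq_one {u v : ℝ} (hu : 0 ≤ u) (hv : 0 ≤ v)
    (huv : u ^ 2 + v ^ 2 = 1) : ∃ θ ∈ Icc (0 : ℝ) (π / 2), sin θ = u ∧ cos θ = v := by
  refine ⟨arcsin u, ⟨arcsin_nonneg.2 hu, arcsin_le_pi_div_two u⟩,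
    sin_arcsin (by linarith) (by nlinarith), ?_⟩
  rw [cos_arcsin, ← huv, add_sub_cancel_left, sqrt_sq hv]

theorem exists_quasipolar (hν : 0 < ν) {T s e : ℝ} (hT : 0 < T) (hs : 0 < s)
    (hsT : s ≤ T ^ ν / 2) (he : 0 ≤ e) (heT : e ≤ T ^ μ / 2) :
    ∃ τ ∈ Ioc 0 T, ∃ θ ∈ Icc (0 : ℝ) (π / 2), s = τ ^ ν * sin θ ∧ e = τ ^ μ * cos θ := by
  have hscale {n : ℕ} {x : ℝ} (hx : x ≤ T ^ n / 2) : T⁻¹ ^ n * x ≤ 1 / 2 := by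
    rw [inv_pow, inv_mul_le_iff₀ (by positivity)]
    linarith
  obtain ⟨t, ht, hcircle⟩ :=
    exists_ge_sq_add_sq_eq_one hν (inv_pos.2 hT) hs he (hscale hsT) (hscale heT)
  have ht0 : 0 < t := (inv_pos.2 hT).trans_le ht
  obtain ⟨θ, hθ, hsin, hcos⟩ :=
    exists_angle_of_sq_add_sq_eq_one (by positivity) (by positivity) hcircle
  refine ⟨t⁻¹, ⟨inv_pos.2 ht0, inv_le_of_inv_le₀ hT ht⟩, θ, hθ, ?_, ?_⟩
  · rw [hsin, inv_pow, inv_mul_cancel_left₀ (by positivity)]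
  · rw [hcos, inv_pow, inv_mul_cancel_left₀ (by positivity)]

theorem exists_eventually_mul_pow_le_of_principalPart_pos (hμ : 0 < μ) (hν : 0 < ν)
    (hsum : ∀ᶠ z : ℝ × ℝ in 𝓝 (0, 0),
      HasSum (fun ij : ℕ × ℕ => q ij.1 ij.2 * z.1 ^ ij.1 * z.2 ^ ij.2) (Q z.1 z.2))
    (hq : ∀ i j : ℕ, q i j ≠ 0 → 1 ≤ (i : ℝ) / μ + (j : ℝ) / ν)
    (hpos : ∀ θ ∈ Icc (0 : ℝ) (π / 2), 0 < principalPart μ ν q (sin θ) (cos θ)) :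
    ∃ c > 0, ∀ᶠ z in 𝓝[>] (0 : ℝ) ×ˢ 𝓝[≥] (0 : ℝ), c * z.1 ^ μ ≤ Q z.1 z.2 := by
  obtain ⟨c, hc, T, hT, hlow⟩ := exists_forall_mul_pow_le_quasipolar hμ hν hsum hq hpos
  refine ⟨c, hc, ?_⟩
  filter_upwards [prod_mem_prod (Ioc_mem_nhdsGT (show 0 < T ^ ν / 2 by positivity))
    (Icc_mem_nhdsGE (show 0 < T ^ μ / 2 by positivity))]
  rintro ⟨s, e⟩ ⟨⟨hs, hsT⟩, he, heT⟩
  obtain ⟨τ, hτ, θ, hθ, rfl, rfl⟩ := exists_quasipolar hν hT hs hsT he heT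
  have hsin1 : sin θ ≤ 1 := sin_le_one θ
  have hτ0 : 0 ≤ τ := hτ.1.le
  calc c * (τ ^ ν * sin θ) ^ μ ≤ c * (τ ^ ν * 1) ^ μ := by gcongr
    _ = c * τ ^ (μ * ν) := by rw [mul_one, ← pow_mul, mul_comm ν]
    _ ≤ Q (τ ^ ν * sin θ) (τ ^ μ * cos θ) := hlow τ hτ θ hθ

end NewtonPolygon

section UnfoldedSaddleNode

theorem pos_of_ne_zero_of_pos {X : Type*} [TopologicalSpace X] {S : Set X} (hS : IsPreconnected S)
    {f : X → ℝ} (hf : ContinuousOn f S) (hne : ∀ x ∈ S, f x ≠ 0) {x₀ : X} (hx₀ : x₀ ∈ S)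
    (hpos : 0 < f x₀) {x : X} (hx : x ∈ S) : 0 < f x := by
  by_contra! hle
  obtain ⟨y, hy, hy0⟩ := hS.intermediate_value hx hx₀ hf ⟨hle, hpos.le⟩
  exact hne y hy hy0

variable {ι E : Type*} {l : Filter ι} {c : ℝ} {M : ℕ}

section Denominator

variable {Q : ℝ → ℝ → ℝ} {e : ι → ℝ}

theorem eventually_mul_pow_le_comp (he : Tendsto e l (𝓝[≥] 0))
    (hlow : ∀ᶠ z in 𝓝[>] (0 : ℝ) ×ˢ 𝓝[≥] (0 : ℝ), c * z.1 ^ M ≤ Q z.1 z.2) :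
    ∀ᶠ z in l ×ˢ 𝓝[>] (0 : ℝ), c * z.2 ^ M ≤ Q z.2 (e z.1) :=
  (tendsto_snd.prodMk (he.comp tendsto_fst)).eventually hlow

theorem moderateDerivs_inv_comp {n : ℕ} (he : Tendsto e l (𝓝[≥] 0))
    (hQ : ContDiffAt ℝ n (fun z : ℝ × ℝ => Q z.1 z.2) (0, 0)) (hc : 0 < c)
    (hlow : ∀ᶠ z in 𝓝[>] (0 : ℝ) ×ˢ 𝓝[≥] (0 : ℝ), c * z.1 ^ M ≤ Q z.1 z.2) :
    ModerateDerivs l n fun i s => (Q s (e i))⁻¹ := by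
  have hbase : Tendsto (fun i => ((0 : ℝ), e i)) l (𝓝ˢ {(0, 0)}) := by
    rw [nhdsSet_singleton]
    exact tendsto_const_nhds.prodMk_nhds (he.mono_right nhdsWithin_le_nhds)
  have hQe : ModerateDerivs l n fun i s => Q s (e i) := by
    simpa using ModerateDerivs.comp_add_smul isCompact_singleton hbase ((1 : ℝ), (0 : ℝ))
      (G := fun z => Q z.1 z.2) (by simpa using hQ)
  exact hQe.inv_of_mul_pow_le hc (eventually_mul_pow_le_comp he hlow)

theorem tendsto_comp_nhdsGT (he : Tendsto e l (𝓝[≥] 0))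
    (hQ : ContinuousAt (fun z : ℝ × ℝ => Q z.1 z.2) (0, 0)) (hQ0 : Q 0 0 = 0) (hc : 0 < c)
    (hlow : ∀ᶠ z in 𝓝[>] (0 : ℝ) ×ˢ 𝓝[≥] (0 : ℝ), c * z.1 ^ M ≤ Q z.1 z.2) :
    Tendsto (fun z : ι × ℝ => Q z.2 (e z.1)) (l ×ˢ 𝓝[>] 0) (𝓝[>] 0) := by
  have hbase : Tendsto (fun z : ι × ℝ => (z.2, e z.1)) (l ×ˢ 𝓝[>] 0) (𝓝 (0, 0)) :=
    tendsto_snd_prod_nhdsGT.prodMk_nhds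
      ((he.mono_right nhdsWithin_le_nhds).comp tendsto_fst)
  have hlim := hQ.tendsto.comp hbase
  simp only [hQ0] at hlim
  refine tendsto_nhdsWithin_iff.2 ⟨hlim, ?_⟩
  filter_upwards [eventually_mul_pow_le_comp he hlow, eventually_prod_nhdsGT_snd_pos] with z hz hz0
  exact lt_of_lt_of_le (by positivity) hz

end Denominator

section Numerator

variable {V : E → ℝ → ℝ} {K : Set E} {a : ι → E} {θ : ι → ℝ}

theorem tendsto_prodMk_nhdsSet_prod_zero [TopologicalSpace E] (hK : IsCompact K)
    (ha : Tendsto a l (𝓝ˢ K)) (hθ : Tendsto θ l (𝓝 0)) :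
    Tendsto (fun i => (a i, θ i)) l (𝓝ˢ (K ×ˢ {(0 : ℝ)})) := by
  rw [hK.nhdsSet_prod_eq isCompact_singleton, nhdsSet_singleton]
  exact ha.prodMk hθ

theorem exists_pos_eventually_le_comp_add [TopologicalSpace E] (hK : IsCompact K)
    (ha : Tendsto a l (𝓝ˢ K)) (hθ : Tendsto θ l (𝓝 0))
    (hV : ∀ a ∈ K, ContinuousAt (fun z : E × ℝ => V z.1 z.2) (a, 0)) (hpos : ∀ a ∈ K, 0 < V a 0) :
    ∃ m > 0, ∀ᶠ z in l ×ˢ 𝓝[>] (0 : ℝ), m ≤ V (a z.1) (z.2 + θ z.1) := by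
  obtain ⟨m, hm, hle⟩ := exists_pos_eventually_nhdsSet_le (hK.prod isCompact_singleton)
    (G := fun z => V z.1 z.2) (by rintro ⟨a, _⟩ ⟨ha, rfl⟩; exact hV a ha)
    (by rintro ⟨a, _⟩ ⟨ha, rfl⟩; exact hpos a ha)
  have hsum := tendsto_snd_prod_nhdsGT.add (hθ.comp tendsto_fst)
  rw [add_zero] at hsum
  exact ⟨m, hm, (tendsto_prodMk_nhdsSet_prod_zero hK (ha.comp tendsto_fst) hsum).eventually hle⟩

theorem moderateDerivs_comp_add [NormedAddCommGroup E] [NormedSpace ℝ E] {n : ℕ}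
    (hK : IsCompact K) (ha : Tendsto a l (𝓝ˢ K)) (hθ : Tendsto θ l (𝓝 0))
    (hV : ∀ a ∈ K, ContDiffAt ℝ n (fun z : E × ℝ => V z.1 z.2) (a, 0)) :
    ModerateDerivs l n fun i s => V (a i) (s + θ i) := by
  simpa [add_comm] using ModerateDerivs.comp_add_smul (hK.prod isCompact_singleton)
    (tendsto_prodMk_nhdsSet_prod_zero hK ha hθ) ((0 : E), (1 : ℝ)) (G := fun z => V z.1 z.2)
    (by rintro ⟨a, _⟩ ⟨ha, rfl⟩; exact hV a ha)

end Numerator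

theorem eventually_pos_of_ne_zero {F : ι → ℝ → ℝ} {θ : ι → ℝ} (hθ : Tendsto θ l (𝓝 0))
    (hF : ∀ᶠ i in l, ContinuousOn (F i) (Ioc (θ i) 1))
    (hne : ∀ᶠ i in l, ∀ x ∈ Ioc (θ i) 1, F i x ≠ 0)
    (hpos : ∀ᶠ z in l ×ˢ 𝓝[>] (0 : ℝ), 0 < F z.1 (z.2 + θ z.1)) :
    ∀ᶠ i in l, ∀ x ∈ Ioc (θ i) 1, 0 < F i x := by
  obtain ⟨b, ⟨hb, hb2⟩, hbl⟩ := exists_Ioc_of_eventually_prod_nhdsGT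
    (p := fun i s => 0 < F i (s + θ i)) hpos one_half_pos
  filter_upwards [hF, hne, hbl, hθ.eventually_lt_const one_half_pos] with i hF hne hbl hθ x hx
  exact pos_of_ne_zero_of_pos isPreconnected_Ioc hF hne (x₀ := b + θ i)
    ⟨by linarith, by linarith⟩ (hbl b ⟨hb, le_rfl⟩) hx

theorem iterate_theta_fundSol_quotient_isBigO [NormedAddCommGroup E] [NormedSpace ℝ E]
    {F : ι → ℝ → ℝ} {Q : ℝ → ℝ → ℝ} {V : E → ℝ → ℝ} {θ e lam : ι → ℝ} {a : ι → E} {K : Set E}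
    {lam₀ : ℝ} (hθ : Tendsto θ l (𝓝 0)) (he : Tendsto e l (𝓝[≥] 0))
    (hK : IsCompact K) (ha : Tendsto a l (𝓝ˢ K))
    (hlam₀ : 0 < lam₀) (hlam : ∀ᶠ i in l, lam₀ ≤ lam i)
    (hF : ∀ᶠ i in l, ContinuousOn (F i) (Ioc (θ i) 1))
    (hne : ∀ᶠ i in l, ∀ x ∈ Ioc (θ i) 1, F i x ≠ 0)
    (hFQ : ∀ᶠ i in l, ∀ s, F i (s + θ i) = s * Q s (e i))
    (hQ : ContDiffAt ℝ ∞ (fun z : ℝ × ℝ => Q z.1 z.2) (0, 0)) (hQ0 : Q 0 0 = 0) (hc : 0 < c)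
    (hlow : ∀ᶠ z in 𝓝[>] (0 : ℝ) ×ˢ 𝓝[≥] (0 : ℝ), c * z.1 ^ M ≤ Q z.1 z.2)
    (hV : ∀ a ∈ K, ContDiffAt ℝ ∞ (fun z : E × ℝ => V z.1 z.2) (a, 0)) (hV0 : ∀ a ∈ K, 0 < V a 0)
    (hVc : ∀ᶠ i in l, ContinuousOn (V (a i)) (Ioc (θ i) 1))
    (hVnonneg : ∀ᶠ i in l, ∀ x ∈ Ioc (θ i) 1, 0 ≤ V (a i) x) (ℓ r : ℕ) :
    (fun z : ι × ℝ => (Theta (lam z.1))^[r]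
        (fun t => fundSol (fun i x => V (a i) x / F i x) θ lam z.1 t / t ^ ℓ) z.2)
      =O[l ×ˢ 𝓝[>] 0] fun z => z.2 := by
  have hQlim := tendsto_comp_nhdsGT he hQ.continuousAt hQ0 hc hlow
  obtain ⟨m, hm, hVm⟩ :=
    exists_pos_eventually_le_comp_add hK ha hθ (fun a ha => (hV a ha).continuousAt) hV0
  have hFpos : ∀ᶠ i in l, ∀ x ∈ Ioc (θ i) 1, 0 < F i x := by
    refine eventually_pos_of_ne_zero hθ hF hne ?_
    filter_upwards [tendsto_fst.eventually hFQ, eventually_prod_nhdsGT_snd_pos,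
      hQlim.eventually self_mem_nhdsWithin] with z hz hz0 hzQ
    rw [hz]
    exact mul_pos hz0 hzQ
  refine iterate_theta_fundSol_div_pow_isBigO
    (W := fun i s => V (a i) (s + θ i) * (Q s (e i))⁻¹) hθ ?_ ?_ hlam₀ hlam ?_ ?_ ?_ ℓ r
  · filter_upwards [hVc, hF, hne] with i hV hF hne using hV.div hF hne
  · filter_upwards [hVnonneg, hFpos] with i hV hF x hx using div_nonneg (hV x hx) (hF x hx).le
  · filter_upwards [tendsto_fst.eventually hFQ] with z hz
    rw [hz, div_mul_eq_div_div_swap, div_eq_mul_inv (V _ _)]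
  · have hn (n : ℕ) : (n : WithTop ℕ∞) ≤ ∞ := by exact_mod_cast le_top
    exact fun n => (moderateDerivs_comp_add hK ha hθ fun a ha => (hV a ha).of_le (hn n)).mul
      (moderateDerivs_inv_comp he (hQ.of_le (hn n)) hc hlow)
  · refine tendsto_atTop_mono' _ ?_ ((tendsto_inv_nhdsGT_zero.comp hQlim).const_mul_atTop hm)
    filter_upwards [hVm, hQlim.eventually self_mem_nhdsWithin] with z hz hzQ
    exact mul_le_mul_of_nonneg_right hz (inv_nonneg.2 (le_of_lt hzQ))

theorem exists_forall_eventually_abs_lt_of_isBigO {α : Type*} {S : Set α}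
    {G : ℕ → (ℝ × α) × ℝ → ℝ}
    (hG : ∀ r, G r =O[(𝓝[≥] 0 ×ˢ 𝓟 S) ×ˢ 𝓝[>] 0] fun z => z.2) (k : ℕ) :
    ∃ ε₀ > 0, ∀ r ≤ k, ∀ δ > 0, ∀ᶠ s in 𝓝[>] 0, ∀ ε ∈ Icc 0 ε₀, ∀ x ∈ S,
      |G r ((ε, x), s)| < δ := by
  choose C hC using fun r => (hG r).bound
  have hall : ∀ᶠ z in (𝓝[≥] (0 : ℝ) ×ˢ 𝓟 S) ×ˢ 𝓝[>] (0 : ℝ), ∀ r ∈ Finset.range (k + 1),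
      ‖G r (z.1, z.2)‖ ≤ C r * ‖z.2‖ := (Finset.eventually_all _).2 fun r _ => hC r
  obtain ⟨b, ⟨hb, -⟩, hbl⟩ := exists_Ioc_of_eventually_prod_nhdsGT
    (p := fun i s => ∀ r ∈ Finset.range (k + 1), ‖G r (i, s)‖ ≤ C r * ‖s‖) hall one_pos
  obtain ⟨ε₀, hε₀, hsub⟩ :=
    mem_nhdsGE_iff_exists_Icc_subset.1 (eventually_prod_principal_iff.1 hbl)
  refine ⟨ε₀, hε₀, fun r hr δ hδ => ?_⟩
  have hlim : Tendsto (fun s : ℝ => C r * ‖s‖) (𝓝[>] 0) (𝓝 0) := by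
    have hcont : Continuous fun s : ℝ => C r * ‖s‖ := by fun_prop
    exact (hcont.tendsto' 0 0 (by simp)).mono_left nhdsWithin_le_nhds
  filter_upwards [hlim.eventually_lt_const hδ, Ioc_mem_nhdsGT hb] with s hsδ hs ε hε x hx
  exact (hsub hε x hx s hs r (Finset.mem_range_succ_iff.2 hr)).trans_lt hsδ

theorem tendsto_rpow_nhdsGE_zero {p : ℝ} (hp : 0 < p) :
    Tendsto (fun x : ℝ => x ^ p) (𝓝[≥] 0) (𝓝[≥] 0) := by
  have hlim := (continuousAt_rpow_const 0 p (.inr hp.le)).tendsto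
  rw [zero_rpow hp.ne'] at hlim
  exact tendsto_nhdsWithin_iff.2 ⟨hlim.mono_left nhdsWithin_le_nhds,
    eventually_mem_nhdsWithin.mono fun x hx => rpow_nonneg hx p⟩

end UnfoldedSaddleNode

theorem theoremA_2_general {E : Type*} [NormedAddCommGroup E] [NormedSpace ℝ E]
    {ρ M : ℕ} (hρ : 0 < ρ) {P Q : ℝ → ℝ → ℝ} {σ : ℝ → ℝ} {V : E → ℝ → ℝ} {K : Set E} {c : ℝ}
    (hP : ∀ᶠ ε in 𝓝[≥] (0 : ℝ), ContinuousOn (fun x => P x ε) (Icc (-1) 1))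
    (hσ : Tendsto σ (𝓝 0) (𝓝 0))
    (hroot : ∀ᶠ ε in 𝓝[≥] (0 : ℝ),
      ∀ x ∈ Icc (-1 : ℝ) 1, σ (ε ^ (1 / (ρ : ℝ))) < x → P x ε ≠ 0)
    (hQP : ∀ s e : ℝ, s * Q s e = P (s + σ e) (e ^ ρ))
    (hQ : ContDiffAt ℝ ∞ (fun z : ℝ × ℝ => Q z.1 z.2) (0, 0)) (hQ0 : Q 0 0 = 0) (hc : 0 < c)
    (hlow : ∀ᶠ z in 𝓝[>] (0 : ℝ) ×ˢ 𝓝[≥] (0 : ℝ), c * z.1 ^ M ≤ Q z.1 z.2)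
    (hK : IsCompact K) (hV : ∀ a ∈ K, ContDiffAt ℝ ∞ (fun z : E × ℝ => V z.1 z.2) (a, 0))
    (hVc : ∀ a ∈ K, ContinuousOn (V a) (Icc (-1) 1))
    (hVnonneg : ∀ a ∈ K, ∀ x ∈ Icc (-1 : ℝ) 1, 0 ≤ V a x) (hV0 : ∀ a ∈ K, 0 < V a 0)
    (ℓ k : ℕ) {lam₀ : ℝ} (hlam₀ : 0 < lam₀) :
    ∃ ε₀ > (0 : ℝ), ∃ h : ℝ → ℝ → E → ℝ → ℝ,
      (∀ s ε : ℝ, ∀ a : E, ∀ lam : ℝ, 0 < s → ε ∈ Icc 0 ε₀ → a ∈ K → lam₀ ≤ lam →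
        Dfun P V (s + σ (ε ^ (1 / (ρ : ℝ)))) ε a lam = s ^ ℓ * h s ε a lam) ∧
      (∀ r ≤ k, ∀ δ > (0 : ℝ), ∀ᶠ s in 𝓝[>] (0 : ℝ),
        ∀ ε ∈ Icc (0 : ℝ) ε₀, ∀ a ∈ K, ∀ lam : ℝ, lam₀ ≤ lam →
          |(Theta lam)^[r] (fun t => h t ε a lam) s| < δ) := by
  let l : Filter (ℝ × E × ℝ) := 𝓝[≥] 0 ×ˢ 𝓟 (K ×ˢ Ici lam₀)
  let e : ℝ × E × ℝ → ℝ := fun i => i.1 ^ (1 / (ρ : ℝ))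
  have he : Tendsto e l (𝓝[≥] 0) := (tendsto_rpow_nhdsGE_zero (by positivity)).comp tendsto_fst
  have hθ : Tendsto (σ ∘ e) l (𝓝 0) := hσ.comp (he.mono_right nhdsWithin_le_nhds)
  have hmem : ∀ᶠ i in l, 0 ≤ i.1 ∧ i.2.1 ∈ K ∧ lam₀ ≤ i.2.2 :=
    Eventually.prod_mk self_mem_nhdsWithin (mem_principal_self _)
  have hsub : ∀ᶠ i in l, Ioc (σ (e i)) 1 ⊆ Icc (-1) 1 := by
    filter_upwards [hθ.eventually_const_lt (show (-1 : ℝ) < 0 by norm_num)] with i hi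
    exact Ioc_subset_Icc_self.trans (Icc_subset_Icc_left hi.le)
  have hbigO := iterate_theta_fundSol_quotient_isBigO (F := fun i x => P x i.1)
    (a := fun i => i.2.1) (lam := fun i => i.2.2) hθ he hK ?_ hlam₀ (hmem.mono fun i hi => hi.2.2)
    ?_ ?_ ?_ hQ hQ0 hc hlow hV hV0 ?_ ?_ ℓ
  · obtain ⟨ε₀, hε₀, hlim⟩ := exists_forall_eventually_abs_lt_of_isBigO hbigO k
    refine ⟨ε₀, hε₀, fun s ε a lam => Dfun P V (s + σ (ε ^ (1 / (ρ : ℝ)))) ε a lam / s ^ ℓ,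
      fun s ε a lam hs _ _ _ => (mul_div_cancel₀ _ (pow_pos hs ℓ).ne').symm, fun r hr δ hδ => ?_⟩
    filter_upwards [hlim r hr δ hδ] with s hs ε hε a ha lam hlam
    exact hs ε hε (a, lam) ⟨ha, hlam⟩
  · exact (tendsto_principal.2 (hmem.mono fun i hi => hi.2.1)).mono_right principal_le_nhdsSet
  · filter_upwards [hsub, tendsto_fst.eventually hP] with i hi hP using hP.mono hi
  · filter_upwards [hsub, tendsto_fst.eventually hroot] with i hi hroot x hx
    exact hroot x (hi hx) hx.1
  · filter_upwards [hmem] with i hi s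
    rw [hQP, ← rpow_natCast, ← rpow_mul hi.1, one_div_mul_cancel (by positivity), rpow_one]
    rfl
  · filter_upwards [hsub, hmem] with i hi hmem using (hVc _ hmem.2.1).mono hi
  · filter_upwards [hsub, hmem] with i hi hmem x hx using hVnonneg _ hmem.2.1 x (hi hx)

/-- **Assertion (2) of Theorem A of the paper.**  Consider the saddle-node unfolding
`X = P_ε(x)∂_x + (λV_a(x)y − U(x))∂_y` with `ε ≥ 0`, where `P_ε` is a polynomial of degree
`μ+1` in `x` with analytic coefficients and `P₀(x) = x^{μ+1}`, `ϑ_ε = σ(ε^{1/ρ})` is its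
biggest real root, `𝒬(s,ǫ) = P(s+σ(ǫ);ǫ^ρ)/s` satisfies hypotheses (H1) and (H2), and
`V_a(0) = 1`, `V_a > 0` on `|x| ≤ 1` for `a` in an open set `A`.  Then for each
`ℓ,k ∈ ℤ⁺`, `λ₀ > 0` and compact `K_a ⊆ A` there exists `ε₀ > 0` such that the fundamental
homogeneous solution can be written as `D(s+ϑ_ε;ε,a,λ) = s^ℓ·h_ℓ(s;ε,a,λ)` with
`Θ_λ^r h_ℓ(s) → 0` as `s → 0⁺` uniformly on `𝒜 = [0,ε₀] × K_a × [λ₀,∞)`, for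
`r = 0,1,…,k`. -/
theorem theoremA_2 {E : Type*} [NormedAddCommGroup E] [NormedSpace ℝ E]
    (μ ρ ν : ℕ) (hμ : 0 < μ) (hρ : 0 < ρ) (hν : 0 < ν)
    (A : Set E) (hA : IsOpen A)
    -- the polynomial family `P(x;ε)`, analytic in `(x,ε)`, `P₀(x) = x^{μ+1}`
    (P : ℝ → ℝ → ℝ) (p : ℕ → ℝ → ℝ)
    (hpa : ∀ i, AnalyticAt ℝ (p i) 0)
    (hPpoly : ∀ x ε : ℝ, P x ε = ∑ i ∈ Finset.range (μ + 2), p i ε * x ^ i)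
    (hP0 : ∀ x : ℝ, P x 0 = x ^ (μ + 1))
    -- the Puiseux parametrization `ϑ_ε = σ(ε^{1/ρ})` of the biggest real root of `P_ε`
    (σ : ℝ → ℝ) (hσa : AnalyticAt ℝ σ 0) (hσ0 : σ 0 = 0)
    (hroot : ∀ᶠ ε in 𝓝[≥] (0 : ℝ),
      P (σ (ε ^ (1 / (ρ : ℝ)))) ε = 0 ∧
      ∀ x ∈ Icc (-1 : ℝ) 1, σ (ε ^ (1 / (ρ : ℝ))) < x → P x ε ≠ 0)
    -- the function `𝒬(s,ǫ) = P(s+σ(ǫ);ǫ^ρ)/s`, analytic at `(0,0)`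
    (Q : ℝ → ℝ → ℝ)
    (hQdef : ∀ s e : ℝ, s * Q s e = P (s + σ e) (e ^ ρ))
    (hQa : AnalyticAt ℝ (fun z : ℝ × ℝ => Q z.1 z.2) (0, 0))
    (hQ0 : ∀ s : ℝ, Q s 0 = s ^ μ)
    -- the Taylor coefficients of `𝒬`, with `𝒬(0,ǫ) = χǫ^ν + ⋯`, `χ > 0`
    (q : ℕ → ℕ → ℝ)
    (hqsum : ∀ᶠ z : ℝ × ℝ in 𝓝 (0, 0),
      HasSum (fun ij : ℕ × ℕ => q ij.1 ij.2 * z.1 ^ ij.1 * z.2 ^ ij.2) (Q z.1 z.2))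
    (hχ : 0 < q 0 ν) (hνmin : ∀ j < ν, q 0 j = 0)
    -- hypothesis (H1)
    (hH1 : ∀ (i j : ℕ), q i j ≠ 0 → 1 ≤ (i : ℝ) / μ + (j : ℝ) / ν)
    -- hypothesis (H2)
    (hH2 : ∀ θ ∈ Icc (0 : ℝ) (π / 2),
      0 < ∑ i ∈ Finset.range (μ + 1), ∑ j ∈ Finset.range (ν + 1),
        (if (i : ℝ) / μ + (j : ℝ) / ν = 1 then q i j * sin θ ^ i * cos θ ^ j else 0))
    -- the family `V_a(x)`, analytic in `(a,x)`, with `V_a(0) = 1` and `V_a > 0`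
    (V : E → ℝ → ℝ)
    (hVa : ∀ a ∈ A, ∀ x ∈ Icc (-1 : ℝ) 1,
      AnalyticAt ℝ (fun z : E × ℝ => V z.1 z.2) (a, x))
    (hV0 : ∀ a ∈ A, V a 0 = 1)
    (hVpos : ∀ a ∈ A, ∀ x ∈ Icc (-1 : ℝ) 1, 0 < V a x) :
    ∀ ℓ k : ℕ, ∀ lam₀ : ℝ, 0 < lam₀ → ∀ Ka : Set E, IsCompact Ka → Ka ⊆ A →
      ∃ ε₀ > (0 : ℝ), ∃ h : ℝ → ℝ → E → ℝ → ℝ,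
        (∀ s ε : ℝ, ∀ a : E, ∀ lam : ℝ, 0 < s → ε ∈ Icc 0 ε₀ → a ∈ Ka → lam₀ ≤ lam →
          Dfun P V (s + σ (ε ^ (1 / (ρ : ℝ)))) ε a lam = s ^ ℓ * h s ε a lam) ∧
        (∀ r ≤ k, ∀ δ > (0 : ℝ), ∀ᶠ s in 𝓝[>] (0 : ℝ),
          ∀ ε ∈ Icc (0 : ℝ) ε₀, ∀ a ∈ Ka, ∀ lam : ℝ, lam₀ ≤ lam →
            |(Theta lam)^[r] (fun t => h t ε a lam) s| < δ) := by
  intro ℓ k lam₀ hlam₀ Ka hKa hKaA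
  obtain ⟨c, hc, hlow⟩ :=
    exists_eventually_mul_pow_le_of_principalPart_pos hμ hν hqsum hH1 hH2
  have hzero : (0 : ℝ) ∈ Icc (-1 : ℝ) 1 := by norm_num
  have hP (ε : ℝ) : Continuous fun x => P x ε := by
    simp only [hPpoly]
    fun_prop
  have hVcont (a : E) (ha : a ∈ Ka) : ContinuousOn (V a) (Icc (-1) 1) := fun x hx =>
    ((hVa a (hKaA ha) x hx).continuousAt.comp
      (continuous_const.prodMk continuous_id).continuousAt).continuousWithinAt
  exact theoremA_2_general hρ (.of_forall fun ε => (hP ε).continuousOn)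
    (hσa.continuousAt.tendsto.trans (by rw [hσ0])) (hroot.mono fun ε hε => hε.2) hQdef
    hQa.contDiffAt (by simp [hQ0, hμ.ne']) hc hlow hKa
    (fun a ha => (hVa a (hKaA ha) 0 hzero).contDiffAt) hVcont
    (fun a ha x hx => (hVpos a (hKaA ha) x hx).le) (fun a ha => hVpos a (hKaA ha) 0 hzero)
    ℓ k hlam₀

end
end

section
/- Lemma 2.7 (basis of induction for Theorem A(1)). Assume ε ≥ 0 and that P_ε satisfies (H1) and (H2). For each ℓ ∈ ℤ⁺, each λ₀ > 0 and every pair of compact sets K_x ⊂ (0,1], K_a ⊂ A, there exists ε₀ > 0 such that the remainder h_ℓ(s) := (𝒯(s) − Σ_ℓ(s))/s^ℓ, where 𝒯(s) := y_L(s+ϑ_ε; x₀,ε,a,λ,U), tends to zero as s → 0⁺, uniformly on K_x × [0,ε₀] × K_a × [λ₀,∞) × 𝒰₁ (x₀ ∈ K_x, a ∈ K_a, λ ≥ λ₀, U ∈ 𝒰₁). -/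
open Set Filter Topology Real intervalIntegral

noncomputable section

/-- The Banach space `𝒰` of real power series with radius of convergence greater than `1`,
with norm `‖U‖ = Σ|u_j|`. -/
structure SeriesU where
  u : ℕ → ℝ
  radius_gt_one : ∃ r : ℝ, 1 < r ∧ Summable fun j => |u j| * r ^ j

/-- The norm `‖U‖ = Σ_{j≥0} |u_j|` on `𝒰`. -/
def SeriesU.norm (U : SeriesU) : ℝ := ∑' j, |U.u j|

/-- Evaluation of `U ∈ 𝒰` at a point `x`. -/
def SeriesU.eval (U : SeriesU) (x : ℝ) : ℝ := ∑' j, U.u j * x ^ j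

/-- The linear finite-difference operator `∇`:
`(∇f)(s) = (f(s) − f(0))/s` for `s ≠ 0` and `(∇f)(0) = f′(0)`. -/
def nabla (f : ℝ → ℝ) : ℝ → ℝ :=
  fun s => if s = 0 then deriv f 0 else (f s - f 0) / s

/-- The particular solution `y_L(x;x₀,ε,a,λ,U) = D(x)·∫_x^{x₀} U(t)/(P_ε(t)D(t)) dt`. -/
def yL {E : Type*} (P : ℝ → ℝ → ℝ) (V : E → ℝ → ℝ) (x x₀ ε : ℝ) (a : E) (lam : ℝ)
    (U : SeriesU) : ℝ :=
  Dfun P V x ε a lam * ∫ t in x..x₀, U.eval t / (P t ε * Dfun P V t ε a lam)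

/-!
Write `R_N(s) = (𝒯(s) − Σ_{j<N} c_j s^j) / s^N`. The recursion `F_{ℓ+1} = 𝒱_ℓ ∇(F_ℓ/𝒱_ℓ)` is made
so that `R_N` satisfies `s 𝒬(s) R_N' = λ (𝒱_N R_N − F_N)`, an equation of the same type as the
one satisfied by `𝒯 = R_0`. As `s 𝒬 > 0` and `𝒱_N > 0` near `0`, the solution `R_N` increases
wherever it exceeds `sup |F_N| / inf 𝒱_N`; so on `(0, b]` it is bounded by this quantity and by
`|R_N(b)|`, whatever the value of `λ`. The `F_N` are bounded uniformly in the parameters because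
`𝒱`, `𝒬` and `𝒰` extend to uniformly bounded holomorphic functions on a fixed complex disc, and
products, inverses of functions bounded away from zero at the origin, and `∇` (by the Schwarz lemma)
keep such a bound on a smaller disc. Finally `h_ℓ = s R_{ℓ+1} = O(s)`.
-/

section BoundedHolomorphic

open Metric

variable {r C v : ℝ} {G : ℂ → ℂ}

theorem div_four_mul_mul_lt (hv : 0 < v) (hvC : v ≤ C) (hr : 0 < r) : v / (4 * C) * r < r := by
  refine mul_lt_of_lt_one_left hr ?_
  rw [div_lt_one (by linarith)]
  linarith

theorem mapsTo_closedBall_two_mul (hb : ∀ z ∈ ball 0 r, ‖G z‖ ≤ C) :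
    MapsTo G (ball 0 r) (closedBall (G 0) (2 * C)) := by
  intro z hz
  have h0 : (0 : ℂ) ∈ ball 0 r := mem_ball_self (pos_of_mem_ball hz)
  rw [mem_closedBall, dist_eq_norm, two_mul]
  exact norm_sub_le_of_le (hb z hz) (hb 0 h0)

theorem norm_sub_le_half_of_norm_le (hd : DifferentiableOn ℂ G (ball 0 r))
    (hb : ∀ z ∈ ball 0 r, ‖G z‖ ≤ C) (hv : 0 < v) (hvC : v ≤ ‖G 0‖) (hr : 0 < r) {z : ℂ}
    (hz : ‖z‖ ≤ v / (4 * C) * r) : ‖G z - G 0‖ ≤ v / 2 := by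
  have h0 := hb 0 (mem_ball_self hr)
  have hC : 0 < C := by linarith
  have hzr : z ∈ ball 0 r :=
    mem_ball_zero_iff.2 (hz.trans_lt (div_four_mul_mul_lt hv (hvC.trans h0) hr))
  calc ‖G z - G 0‖ ≤ 2 * C / r * ‖z‖ := by
        simpa [dist_eq_norm] using
          Complex.dist_le_div_mul_dist_of_mapsTo_ball hd (mapsTo_closedBall_two_mul hb) hzr
    _ ≤ 2 * C / r * (v / (4 * C) * r) := by gcongr
    _ = v / 2 := by field_simp; ring

end BoundedHolomorphic

open Metric in
/-- `f` agrees on the real interval `(-r, r)` with a holomorphic function on the disc `|z| < r`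
that is bounded by `C` there. Keeping `r` and `C` explicit makes statements about a single function
uniform over families of functions; the extension itself is irrelevant. -/
def HasBoundedExtension (r C : ℝ) (f : ℝ → ℝ) : Prop :=
  ∃ g : ℂ → ℂ, DifferentiableOn ℂ g (ball 0 r) ∧ (∀ z ∈ ball 0 r, ‖g z‖ ≤ C) ∧
    ∀ s : ℝ, |s| < r → g s = f s

namespace HasBoundedExtension

open Metric

variable {r r' C C' D v : ℝ} {f g : ℝ → ℝ}

theorem mono (h : HasBoundedExtension r C f) (hr : r' ≤ r) (hC : C ≤ C') :
    HasBoundedExtension r' C' f := by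
  obtain ⟨G, hd, hb, he⟩ := h
  exact ⟨G, hd.mono (ball_subset_ball hr), fun z hz => (hb z (ball_subset_ball hr hz)).trans hC,
    fun s hs => he s (hs.trans_le hr)⟩

theorem congr (h : HasBoundedExtension r C f) (hfg : ∀ s, |s| < r → g s = f s) :
    HasBoundedExtension r C g := by
  obtain ⟨G, hd, hb, he⟩ := h
  exact ⟨G, hd, hb, fun s hs => by rw [he s hs, hfg s hs]⟩

theorem abs_le (h : HasBoundedExtension r C f) {s : ℝ} (hs : |s| < r) : |f s| ≤ C := by
  obtain ⟨G, -, hb, he⟩ := h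
  simpa [he s hs] using hb s (by simpa using hs)

theorem add (hf : HasBoundedExtension r C f) (hg : HasBoundedExtension r D g) :
    HasBoundedExtension r (C + D) (fun s => f s + g s) := by
  obtain ⟨F, hFd, hFb, hFe⟩ := hf
  obtain ⟨G, hGd, hGb, hGe⟩ := hg
  exact ⟨fun z => F z + G z, hFd.add hGd,
    fun z hz => (norm_add_le _ _).trans (add_le_add (hFb z hz) (hGb z hz)),
    fun s hs => by simp [hFe s hs, hGe s hs]⟩

theorem mul (hf : HasBoundedExtension r C f) (hg : HasBoundedExtension r D g) :
    HasBoundedExtension r (C * D) (fun s => f s * g s) := by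
  obtain ⟨F, hFd, hFb, hFe⟩ := hf
  obtain ⟨G, hGd, hGb, hGe⟩ := hg
  exact ⟨fun z => F z * G z, hFd.mul hGd, fun z hz => norm_mul_le_of_le (hFb z hz) (hGb z hz),
    fun s hs => by simp [hFe s hs, hGe s hs]⟩

theorem const_mul {a A : ℝ} (ha : |a| ≤ A) (hf : HasBoundedExtension r C f) :
    HasBoundedExtension r (A * C) (fun s => a * f s) :=
  mul ⟨fun _ => a, by fun_prop, by simpa using fun _ _ => ha, fun _ _ => rfl⟩ hf

theorem half_le (h : HasBoundedExtension r C f) (hr : 0 < r) (hv : 0 < v) (hvf : v ≤ f 0) {s : ℝ}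
    (hs : |s| ≤ v / (4 * C) * r) : v / 2 ≤ f s := by
  have hvC : v ≤ C := (hvf.trans (le_abs_self _)).trans (h.abs_le (by simpa using hr))
  have hsr : |s| < r := hs.trans_lt (div_four_mul_mul_lt hv hvC hr)
  obtain ⟨G, hd, hb, he⟩ := h
  have he0 : G 0 = f 0 := by simpa using he 0 (by simpa using hr)
  have hvG : v ≤ ‖G 0‖ := by simpa [he0] using hvf.trans (le_abs_self _)
  have hdist : |f s - f 0| ≤ v / 2 := by
    simpa [he s hsr, he0, ← Complex.ofReal_sub] using
      norm_sub_le_half_of_norm_le hd hb hv hvG hr (z := s) (by simpa using hs)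
  linarith [(_root_.abs_le.1 hdist).1]

theorem inv (h : HasBoundedExtension r C f) (hr : 0 < r) (hv : 0 < v) (hvf : v ≤ |f 0|) :
    HasBoundedExtension (v / (4 * C) * r) (2 / v) (fun s => (f s)⁻¹) := by
  have hsub := div_four_mul_mul_lt hv (hvf.trans (h.abs_le (by simpa using hr))) hr
  obtain ⟨G, hd, hb, he⟩ := h
  have hvG : v ≤ ‖G 0‖ := by
    simpa [show G 0 = f 0 by simpa using he 0 (by simpa using hr)] using hvf
  have hlow : ∀ z ∈ ball 0 (v / (4 * C) * r), v / 2 ≤ ‖G z‖ := fun z hz => by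
    have hdist := norm_sub_le_half_of_norm_le hd hb hv hvG hr (mem_ball_zero_iff.1 hz).le
    have htri := norm_sub_norm_le (G 0) (G z)
    rw [norm_sub_rev] at htri
    linarith
  refine ⟨fun z => (G z)⁻¹, (hd.mono (ball_subset_ball hsub.le)).fun_inv fun z hz => ?_,
    fun z hz => ?_, fun s hs => by simp [he s (hs.trans hsub)]⟩
  · exact norm_pos_iff.1 ((half_pos hv).trans_le (hlow z hz))
  · rw [norm_inv, ← inv_div]
    exact inv_anti₀ (half_pos hv) (hlow z hz)

theorem nabla (h : HasBoundedExtension r C f) (hr : 0 < r) :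
    HasBoundedExtension r (2 * C / r) (nabla f) := by
  obtain ⟨G, hd, hb, he⟩ := h
  have hball : ball (0 : ℂ) r ∈ 𝓝 0 := ball_mem_nhds 0 hr
  have he0 : G 0 = f 0 := by simpa using he 0 (by simpa using hr)
  have hderiv : deriv G 0 = deriv f 0 := by
    have hG : HasDerivAt G (deriv G 0) ((0 : ℝ) : ℂ) := by
      simpa using (hd.differentiableAt hball).hasDerivAt
    have hGf : (fun s : ℝ => (f s : ℂ)) =ᶠ[𝓝 0] fun s => G s := by
      filter_upwards [ball_mem_nhds (0 : ℝ) hr] with s hs using (he s (by simpa using hs)).symm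
    have hf : HasDerivAt f (deriv G 0).re 0 :=
      hG.real_of_complex.congr_of_eventuallyEq (hGf.mono fun s hs => by simp [← hs])
    rw [hf.deriv]
    exact (hG.comp_ofReal.congr_of_eventuallyEq hGf).unique hf.ofReal_comp
  refine ⟨dslope G 0, (Complex.differentiableOn_dslope hball).2 hd, fun z hz =>
    Complex.norm_dslope_le_div_of_mapsTo_ball hd (mapsTo_closedBall_two_mul hb) hz, fun s hs => ?_⟩
  rcases eq_or_ne s 0 with rfl | hs0
  · simp [_root_.nabla, hderiv]
  · rw [dslope_of_ne _ (by simpa using hs0), slope_def_field, he s hs, he0]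
    simp [_root_.nabla, hs0]

theorem tsum {a : ℕ → ℝ} {R c : ℝ} (ha : Summable fun j => |a j| * R ^ j) (hc : |c| + r ≤ R) :
    HasBoundedExtension r (∑' j, |a j| * R ^ j) (fun s => ∑' j, a j * (s + c) ^ j) := by
  have hterm : ∀ j, ∀ z ∈ ball (0 : ℂ) r, ‖(a j : ℂ) * (z + c) ^ j‖ ≤ |a j| * R ^ j := by
    intro j z hz
    have hzc : ‖z + c‖ ≤ R := calc
      ‖z + c‖ ≤ r + |c| := norm_add_le_of_le (mem_ball_zero_iff.1 hz).le (by simp)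
      _ ≤ R := by linarith
    rw [norm_mul, norm_pow, Complex.norm_real, Real.norm_eq_abs]
    gcongr
  refine ⟨fun z => ∑' j, (a j : ℂ) * (z + c) ^ j,
    Complex.differentiableOn_tsum_of_summable_norm ha (fun j => by fun_prop) isOpen_ball hterm,
    fun z hz => tsum_of_norm_bounded ha.hasSum fun j => hterm j z hz, fun s _ => ?_⟩
  push_cast
  rfl

end HasBoundedExtension

section Analytic

open scoped NNReal ENNReal

theorem exists_tsum_norm_changeOrigin_le {𝕜 E F : Type*} [NontriviallyNormedField 𝕜]
    [NormedAddCommGroup E] [NormedSpace 𝕜 E] [NormedAddCommGroup F] [NormedSpace 𝕜 F]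
    (p : FormalMultilinearSeries 𝕜 E F) {R R' : ℝ≥0}
    (hR : (R + R' : ℝ≥0∞) < p.radius) :
    ∃ C : ℝ, ∀ y : E, ‖y‖ ≤ R → Summable (fun k => ‖p.changeOrigin y k‖ * (R' : ℝ) ^ k) ∧
      ∑' k, ‖p.changeOrigin y k‖ * (R' : ℝ) ^ k ≤ C := by
  have hsum := (NNReal.summable_sigma.1 (p.changeOriginSeries_summable_aux₁ hR)).2
  refine ⟨((∑' k, ∑' s : Σ l : ℕ, {s : Finset (Fin (k + l)) // s.card = l},
    ‖p (k + s.1)‖₊ * R ^ s.1 * R' ^ k : ℝ≥0) : ℝ), fun y hy => ?_⟩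
  have hyR : (‖y‖₊ : ℝ≥0∞) < p.radius :=
    (ENNReal.coe_le_coe.2 hy).trans_lt (le_self_add.trans_lt hR)
  have hle : ∀ k, ‖p.changeOrigin y k‖₊ * R' ^ k ≤
      ∑' s : Σ l : ℕ, {s : Finset (Fin (k + l)) // s.card = l},
        ‖p (k + s.1)‖₊ * R ^ s.1 * R' ^ k := fun k => by
    rw [NNReal.tsum_mul_right]
    gcongr
    refine (p.nnnorm_changeOrigin_le k hyR).trans ?_
    refine (p.changeOriginSeries_summable_aux₂ hyR k).tsum_le_tsum (fun s => ?_)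
      (p.changeOriginSeries_summable_aux₂ (le_self_add.trans_lt hR) k)
    gcongr
    exact hy
  have hsum' : Summable fun k => ‖p.changeOrigin y k‖₊ * R' ^ k :=
    NNReal.summable_of_le hle hsum
  refine ⟨by simpa using NNReal.summable_coe.2 hsum', ?_⟩
  simpa only [NNReal.coe_tsum, NNReal.coe_mul, NNReal.coe_pow, coe_nnnorm] using
    NNReal.coe_le_coe.2 (hsum'.tsum_le_tsum hle hsum)

theorem hasSum_smul_of_hasFPowerSeriesOnBall {𝕜 E F : Type*} [NontriviallyNormedField 𝕜]
    [NormedAddCommGroup E] [NormedSpace 𝕜 E] [NormedAddCommGroup F] [NormedSpace 𝕜 F]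
    {f : E → F} {p : FormalMultilinearSeries 𝕜 E F} {x : E} {R : ℝ≥0∞}
    (hf : HasFPowerSeriesOnBall f p x R) {t : 𝕜} {u : E} (htu : ‖t • u‖ₑ < R) :
    HasSum (fun k => t ^ k • p k fun _ => u) (f (x + t • u)) := by
  refine (hf.hasSum (y := t • u) (by simpa using htu)).congr_fun fun k => ?_
  simpa using ((p k).map_smul_univ (fun _ => t) fun _ => u).symm

section

variable {X : Type*} [NormedAddCommGroup X] [NormedSpace ℝ X] {G : X × ℝ → ℝ} {x₀ : X}

theorem hasBoundedExtension_of_hasFPowerSeriesOnBall {p : FormalMultilinearSeries ℝ (X × ℝ) ℝ}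
    {R : ℝ≥0∞} (hG : HasFPowerSeriesOnBall G p (x₀, 0) R) {δ : ℝ≥0} (hδ : (δ : ℝ≥0∞) ≤ R) {C : ℝ}
    (hsum : Summable fun k => ‖p k‖ * (δ : ℝ) ^ k) (hC : ∑' k, ‖p k‖ * (δ : ℝ) ^ k ≤ C) :
    HasBoundedExtension δ C (fun s => G (x₀, s)) := by
  let a : ℕ → ℝ := fun k => p k fun _ => ((0 : X), (1 : ℝ))
  have ha : ∀ k, |a k| * (δ : ℝ) ^ k ≤ ‖p k‖ * (δ : ℝ) ^ k := fun k => by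
    gcongr
    simpa using (p k).le_opNorm fun _ => ((0 : X), (1 : ℝ))
  have ha_sum : Summable fun k => |a k| * (δ : ℝ) ^ k :=
    .of_nonneg_of_le (fun k => by positivity) ha hsum
  have hGa : ∀ s : ℝ, |s| < δ → G (x₀, s) = ∑' k, a k * (s + 0) ^ k := fun s hs => by
    have hsR : ‖s • ((0 : X), (1 : ℝ))‖ₑ < R := by
      refine lt_of_lt_of_le ?_ hδ
      rw [← ofReal_norm, ENNReal.ofReal_lt_coe_iff (norm_nonneg _)]
      simpa using hs
    simpa [mul_comm] using (hasSum_smul_of_hasFPowerSeriesOnBall hG hsR).tsum_eq.symm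
  refine ((HasBoundedExtension.tsum (c := 0) ha_sum (by simp)).mono le_rfl ?_).congr hGa
  exact (ha_sum.tsum_le_tsum ha hsum).trans hC

theorem exists_eventually_hasBoundedExtension (hG : AnalyticAt ℝ G (x₀, 0)) :
    ∃ r > 0, ∃ C, ∀ᶠ x in 𝓝 x₀, HasBoundedExtension r C (fun s => G (x, s)) := by
  obtain ⟨p, R, hp⟩ := hG
  obtain ⟨δ, hδ, hδR⟩ : ∃ δ : ℝ≥0, 0 < δ ∧ (δ + δ : ℝ≥0∞) < R := by
    obtain ⟨δ, hδ, hδR⟩ := ENNReal.lt_iff_exists_nnreal_btwn.1 hp.r_pos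
    refine ⟨δ / 2, half_pos (by simpa using hδ), ?_⟩
    rwa [← ENNReal.coe_add, add_halves]
  obtain ⟨C, hC⟩ := exists_tsum_norm_changeOrigin_le p (hδR.trans_le hp.r_le)
  refine ⟨δ, hδ, C, ?_⟩
  filter_upwards [Metric.closedBall_mem_nhds x₀ (NNReal.coe_pos.2 hδ)] with x hx
  have hy : ‖(x - x₀, (0 : ℝ))‖ ≤ δ := by simpa [dist_eq_norm] using hx
  have hyR : (δ : ℝ≥0∞) + ‖(x - x₀, (0 : ℝ))‖₊ < R := by
    refine lt_of_le_of_lt ?_ hδR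
    gcongr
    exact hy
  have hpx := hp.changeOrigin (le_add_self.trans_lt hyR)
  rw [Prod.mk_add_mk, add_sub_cancel, add_zero] at hpx
  obtain ⟨hsum, hle⟩ := hC _ hy
  exact hasBoundedExtension_of_hasFPowerSeriesOnBall hpx
    (ENNReal.le_sub_of_add_le_right ENNReal.coe_ne_top hyR.le) hsum hle

theorem exists_eventually_nhdsSet_hasBoundedExtension {K : Set X} (hK : IsCompact K)
    (hG : ∀ x ∈ K, AnalyticAt ℝ G (x, 0)) :
    ∃ r > 0, ∃ C, ∀ᶠ x in 𝓝ˢ K, HasBoundedExtension r C (fun s => G (x, s)) := by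
  refine hK.induction_on (p := fun S => ∃ r > 0, ∃ C, ∀ᶠ x in 𝓝ˢ S,
    HasBoundedExtension r C (fun s => G (x, s))) ⟨1, one_pos, 0, by simp⟩ ?_ ?_ ?_
  · rintro S T hST ⟨r, hr, C, h⟩
    exact ⟨r, hr, C, h.filter_mono (nhdsSet_mono hST)⟩
  · rintro S T ⟨r, hr, C, hS⟩ ⟨r', hr', C', hT⟩
    refine ⟨min r r', lt_min hr hr', max C C', ?_⟩
    rw [nhdsSet_union, eventually_sup]
    exact ⟨hS.mono fun x hx => hx.mono (min_le_left _ _) (le_max_left _ _),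
      hT.mono fun x hx => hx.mono (min_le_right _ _) (le_max_right _ _)⟩
  · intro x hx
    obtain ⟨r, hr, C, h⟩ := exists_eventually_hasBoundedExtension (hG x hx)
    exact ⟨_, mem_nhdsWithin_of_mem_nhds (eventually_eventually_nhds.2 h), r, hr, C,
      eventually_nhdsSet_iff_forall.2 fun _ hy => hy⟩

end

end Analytic

section MaximumPrinciple

variable {z : ℝ → ℝ} {x β M : ℝ}

theorem le_of_hasDerivAt_pos_of_lt {z' : ℝ → ℝ} (hx : x ≤ β) (hcont : ContinuousOn z (Icc x β))
    (hz : ∀ t ∈ Ico x β, HasDerivAt z (z' t) t) (hpos : ∀ t ∈ Ico x β, M < z t → 0 < z' t)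
    (hβ : z β ≤ M) : z x ≤ M := by
  by_contra! hlt
  obtain ⟨y, hy, hmax⟩ := isCompact_Icc.exists_isMaxOn ⟨x, left_mem_Icc.2 hx⟩ hcont
  have hyM : M < z y := hlt.trans_le (hmax (left_mem_Icc.2 hx))
  have hyβ : y < β := hy.2.lt_of_ne fun h => (h ▸ hyM).not_ge hβ
  have hy' : y ∈ Ico x β := ⟨hy.1, hyβ⟩
  have hslope : ∀ᶠ t in 𝓝[>] y, 0 < slope z y t :=
    (hasDerivAt_iff_tendsto_slope.1 (hz y hy')).eventually (lt_mem_nhds (hpos y hy' hyM))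
      |>.filter_mono (nhdsWithin_mono _ fun t ht => ne_of_gt ht)
  obtain ⟨t, ht, hyt, htβ⟩ := (hslope.and (Ioo_mem_nhdsGT hyβ)).exists
  exact ((slope_pos_iff_of_le hyt.le).1 ht).not_ge (hmax ⟨hy.1.trans hyt.le, htβ.le⟩)

variable {p w f : ℝ → ℝ} {lam : ℝ}

theorem abs_le_of_hasDerivAt_eq_div (hx : x ≤ β) (hlam : 0 < lam)
    (hcont : ContinuousOn z (Icc x β))
    (hz : ∀ t ∈ Ico x β, HasDerivAt z (lam * (w t * z t - f t) / p t) t)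
    (hp : ∀ t ∈ Ico x β, 0 < p t) (hw : ∀ t ∈ Ico x β, 0 < w t)
    (hf : ∀ t ∈ Ico x β, |f t| ≤ M * w t) (hβ : |z β| ≤ M) : |z x| ≤ M := by
  refine abs_le'.2 ⟨le_of_hasDerivAt_pos_of_lt hx hcont hz (fun t ht hMt => ?_) (abs_le'.1 hβ).1,
    le_of_hasDerivAt_pos_of_lt (z := -z) hx hcont.neg (fun t ht => (hz t ht).neg)
      (fun t ht hMt => ?_) (abs_le'.1 hβ).2⟩
  · have hfw : f t < w t * z t := calc
      f t ≤ M * w t := (le_abs_self _).trans (hf t ht)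
      _ < z t * w t := mul_lt_mul_of_pos_right hMt (hw t ht)
      _ = w t * z t := mul_comm _ _
    exact div_pos (mul_pos hlam (sub_pos.2 hfw)) (hp t ht)
  · have hfw : w t * z t < f t := neg_lt_neg_iff.1 <| calc
      -f t ≤ M * w t := (neg_le_abs _).trans (hf t ht)
      _ < -z t * w t := mul_lt_mul_of_pos_right hMt (hw t ht)
      _ = -(w t * z t) := by ring
    rw [← neg_div]
    exact div_pos (neg_pos.2 (mul_neg_of_pos_of_neg hlam (sub_neg.2 hfw))) (hp t ht)

end MaximumPrinciple

section Expansion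

/-- The paper's `𝒱_ℓ(s) = 𝒱(s) − (ℓ/λ)𝒬(s)`. -/
def shiftedCoeff (lam : ℝ) (w Q : ℝ → ℝ) (l : ℕ) (s : ℝ) : ℝ :=
  w s - l / lam * Q s

/-- `F` and `c` are generated from `F 0` by the recursion `F_{ℓ+1} = W_ℓ ∇(F_ℓ / W_ℓ)`,
`c_ℓ = (F_ℓ / W_ℓ)(0)` of the paper, for an arbitrary sequence of weights `W`. -/
structure IsNablaExpansion (W F : ℕ → ℝ → ℝ) (c : ℕ → ℝ) : Prop where
  succ : ∀ l s, F (l + 1) s = W l s * nabla (fun t => F l t / W l t) s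
  coeff : ∀ l, c l = F l 0 / W l 0

/-- The remainder of order `l` in the expansion of `T` at `0`, divided by `s ^ l`; its value at
`s = 0` is irrelevant. The paper's `h_ℓ(s)` is `s * scaledRemainder T c (ℓ + 1) s`. -/
def scaledRemainder (T : ℝ → ℝ) (c : ℕ → ℝ) (l : ℕ) (s : ℝ) : ℝ :=
  (T s - ∑ j ∈ Finset.range l, c j * s ^ j) / s ^ l

theorem scaledRemainder_zero (T : ℝ → ℝ) (c : ℕ → ℝ) : scaledRemainder T c 0 = T := by
  ext s
  simp [scaledRemainder]

theorem scaledRemainder_succ (T : ℝ → ℝ) (c : ℕ → ℝ) (l : ℕ) (s : ℝ) :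
    scaledRemainder T c (l + 1) s = (scaledRemainder T c l s - c l) / s := by
  rcases eq_or_ne s 0 with rfl | hs
  · simp [scaledRemainder]
  · simp only [scaledRemainder, Finset.sum_range_succ]
    field_simp
    ring

theorem abs_scaledRemainder_le {T : ℝ → ℝ} {c : ℕ → ℝ} {N : ℕ} {s M C : ℝ} (hs : 0 < s)
    (hT : |T s| ≤ M) (hc : ∀ j < N, |c j| ≤ C) :
    |scaledRemainder T c N s| ≤ (M + ∑ j ∈ Finset.range N, C * s ^ j) / s ^ N := by
  rw [scaledRemainder, abs_div, abs_of_pos (pow_pos hs N)]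
  gcongr
  refine (abs_sub _ _).trans (add_le_add hT ((Finset.abs_sum_le_sum_abs _ _).trans ?_))
  refine Finset.sum_le_sum fun j hj => ?_
  rw [abs_mul, abs_of_pos (pow_pos hs j)]
  gcongr
  exact hc j (Finset.mem_range.1 hj)

namespace IsNablaExpansion

variable {W F : ℕ → ℝ → ℝ} {c : ℕ → ℝ}

theorem mul_succ (h : IsNablaExpansion W F c) {l : ℕ} {s : ℝ} (hs : s ≠ 0) (hW : W l s ≠ 0) :
    s * F (l + 1) s = F l s - c l * W l s := by
  rw [h.succ, h.coeff, nabla, if_neg hs]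
  field_simp

theorem exists_hasBoundedExtension {r v D : ℝ} (hr : 0 < r) (hv : 0 < v) (hvD : v ≤ D) (C : ℝ)
    (N : ℕ) : ∃ r' ∈ Ioc 0 r, ∃ C', ∀ {W F c}, IsNablaExpansion W F c →
      HasBoundedExtension r C (F 0) →
      (∀ l < N, HasBoundedExtension r D (W l) ∧ v ≤ |W l 0|) →
      ∀ l ≤ N, HasBoundedExtension r' C' (F l) := by
  induction N with
  | zero => exact ⟨r, ⟨hr, le_rfl⟩, C, fun _ hF0 _ l hl => by rwa [Nat.le_zero.1 hl]⟩
  | succ N ih =>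
    obtain ⟨r₁, ⟨hr₁, hr₁r⟩, C₁, hN⟩ := ih
    have hD : 0 < D := hv.trans_le hvD
    have hr₂ : 0 < v / (4 * D) * r₁ := by positivity
    have hr₂r₁ := (div_four_mul_mul_lt hv hvD hr₁).le
    refine ⟨v / (4 * D) * r₁, ⟨hr₂, hr₂r₁.trans hr₁r⟩,
      max C₁ (D * (2 * (C₁ * (2 / v)) / (v / (4 * D) * r₁))), fun {W F c} h hF0 hW l hl => ?_⟩
    have hFl : ∀ l ≤ N, HasBoundedExtension r₁ C₁ (F l) := hN h hF0 fun l hl => hW l (by lia)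
    obtain ⟨hWN, hvN⟩ := hW N N.lt_succ_self
    rcases Nat.le_succ_iff.1 hl with hl | rfl
    · exact (hFl l hl).mono hr₂r₁ (le_max_left _ _)
    · have hquot := ((hFl N le_rfl).mono hr₂r₁ le_rfl).mul
        ((hWN.mono hr₁r le_rfl).inv hr₁ hv hvN)
      have hprod := (hWN.mono (hr₂r₁.trans hr₁r) le_rfl).mul (hquot.nabla hr₂)
      exact (hprod.congr fun s _ => h.succ N s).mono le_rfl (le_max_right _ _)

theorem hasDerivAt_scaledRemainder {w Q T : ℝ → ℝ} {lam b : ℝ} {N : ℕ} (hlam : lam ≠ 0)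
    (h : IsNablaExpansion (shiftedCoeff lam w Q) F c)
    (hQ : ∀ s ∈ Ioo 0 b, Q s ≠ 0) (hW : ∀ l < N, ∀ s ∈ Ioo 0 b, shiftedCoeff lam w Q l s ≠ 0)
    (hT : ∀ s ∈ Ioo 0 b, HasDerivAt T (lam * (w s * T s - F 0 s) / (s * Q s)) s) :
    ∀ s ∈ Ioo 0 b, HasDerivAt (scaledRemainder T c N)
      (lam * (shiftedCoeff lam w Q N s * scaledRemainder T c N s - F N s) / (s * Q s)) s := by
  induction N with
  | zero => simpa [scaledRemainder_zero, shiftedCoeff] using hT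
  | succ N ih =>
    intro s hs
    have hs0 : s ≠ 0 := hs.1.ne'
    have hQs := hQ s hs
    have hquot := ((ih (fun l hl => hW l (by lia)) s hs).sub_const (c N)).div (hasDerivAt_id s) hs0
    rw [funext (scaledRemainder_succ T c N)]
    refine hquot.congr_deriv ?_
    have hF : F (N + 1) s = (F N s - c N * shiftedCoeff lam w Q N s) / s :=
      eq_div_of_mul_eq hs0 (by rw [mul_comm, h.mul_succ hs0 (hW N N.lt_succ_self s hs)])
    rw [hF]
    simp only [shiftedCoeff, id]
    push_cast
    field_simp
    ring

theorem abs_coeff_le {j : ℕ} {v C : ℝ} (h : IsNablaExpansion W F c) (hF : |F j 0| ≤ C)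
    (hv : 0 < v) (hW : v ≤ W j 0) : |c j| ≤ C / v := by
  rw [h.coeff, abs_div]
  exact div_le_div₀ ((abs_nonneg _).trans hF) hF hv (hW.trans (le_abs_self _))

theorem abs_scaledRemainder_le {w Q T : ℝ → ℝ} {lam b v C M s : ℝ} {N : ℕ} (hlam : 0 < lam)
    (h : IsNablaExpansion (shiftedCoeff lam w Q) F c) (hv : 0 < v)
    (hW : ∀ l ≤ N, ∀ s ∈ Ico 0 b, v ≤ shiftedCoeff lam w Q l s)
    (hF : ∀ l ≤ N, ∀ s ∈ Ico 0 b, |F l s| ≤ C) (hQ : ∀ s ∈ Ioo 0 b, 0 < s * Q s)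
    (hT : ∀ s ∈ Ioo 0 b, HasDerivAt T (lam * (w s * T s - F 0 s) / (s * Q s)) s)
    (hTM : ∀ s ∈ Ioo 0 b, |T s| ≤ M) (hs : s ∈ Ioc 0 (b / 2)) :
    |scaledRemainder T c N s| ≤
      max ((M + ∑ j ∈ Finset.range N, C / v * (b / 2) ^ j) / (b / 2) ^ N) (C / v) := by
  have hb : 0 < b / 2 := hs.1.trans_le hs.2
  have hIoo : Icc s (b / 2) ⊆ Ioo 0 b := fun t ht =>
    ⟨hs.1.trans_le ht.1, ht.2.trans_lt (by linarith)⟩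
  have hode := h.hasDerivAt_scaledRemainder (N := N) hlam.ne'
    (fun t ht => right_ne_zero_of_mul (hQ t ht).ne')
    (fun l hl t ht => (hv.trans_le (hW l hl.le t (Ioo_subset_Ico_self ht))).ne') hT
  have h0 : (0 : ℝ) ∈ Ico 0 b := ⟨le_rfl, by linarith⟩
  have hC : 0 ≤ C := (abs_nonneg _).trans (hF N le_rfl 0 h0)
  have hWN : ∀ t ∈ Ico s (b / 2), v ≤ shiftedCoeff lam w Q N t := fun t ht =>
    hW N le_rfl t (Ioo_subset_Ico_self (hIoo (Ico_subset_Icc_self ht)))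
  refine abs_le_of_hasDerivAt_eq_div hs.2 hlam
    (fun t ht => (hode t (hIoo ht)).continuousAt.continuousWithinAt)
    (fun t ht => hode t (hIoo (Ico_subset_Icc_self ht)))
    (fun t ht => hQ t (hIoo (Ico_subset_Icc_self ht)))
    (fun t ht => hv.trans_le (hWN t ht)) (fun t ht => ?_) (le_max_of_le_left ?_)
  · calc |F N t| ≤ C := hF N le_rfl t (Ioo_subset_Ico_self (hIoo (Ico_subset_Icc_self ht)))
      _ = C / v * v := (div_mul_cancel₀ C hv.ne').symm
      _ ≤ _ := mul_le_mul (le_max_right _ _) (hWN t ht) hv.le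
        (le_max_of_le_right (div_nonneg hC hv.le))
  · exact _root_.abs_scaledRemainder_le hb (hTM _ (hIoo ⟨hs.2, le_rfl⟩)) fun j hj =>
      h.abs_coeff_le (hF j hj.le 0 h0) hv (hW j hj.le 0 h0)

theorem exists_forall_abs_scaledRemainder_le {r v D b : ℝ} (hr : 0 < r) (hv : 0 < v) (hvD : v ≤ D)
    (hb : 0 < b) (C M : ℝ) (N : ℕ) :
    ∃ s₁ > 0, ∃ M', ∀ {lam : ℝ} {w Q T : ℝ → ℝ} {F c}, 0 < lam →
      IsNablaExpansion (shiftedCoeff lam w Q) F c → HasBoundedExtension r C (F 0) →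
      (∀ l ≤ N, HasBoundedExtension r D (shiftedCoeff lam w Q l) ∧
        v ≤ shiftedCoeff lam w Q l 0) →
      (∀ s ∈ Ioo 0 b, 0 < s * Q s) →
      (∀ s ∈ Ioo 0 b, HasDerivAt T (lam * (w s * T s - F 0 s) / (s * Q s)) s) →
      (∀ s ∈ Ioo 0 b, |T s| ≤ M) → ∀ s ∈ Ioc 0 s₁, |scaledRemainder T c N s| ≤ M' := by
  obtain ⟨r', ⟨hr', -⟩, C', hF⟩ := exists_hasBoundedExtension hr hv hvD C N
  have hD : 0 < D := hv.trans_le hvD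
  let b' := min b (min r' (v / (4 * D) * r))
  have hb' : 0 < b' := by positivity
  have hb'b : Ioo 0 b' ⊆ Ioo 0 b := Ioo_subset_Ioo_right (min_le_left _ _)
  have hb'r' : b' ≤ r' := (min_le_right _ _).trans (min_le_left _ _)
  have hb'r : b' ≤ v / (4 * D) * r := (min_le_right _ _).trans (min_le_right _ _)
  refine ⟨b' / 2, half_pos hb', _, fun hlam h hF0 hW hQ hT hTM s hs =>
    h.abs_scaledRemainder_le (b := b') (C := C') (M := M) hlam (half_pos hv) (fun l hl t ht => ?_)
      (fun l hl t ht => ?_) (fun t ht => hQ t (hb'b ht)) (fun t ht => hT t (hb'b ht))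
      (fun t ht => hTM t (hb'b ht)) hs⟩
  · exact (hW l hl).1.half_le hr hv (hW l hl).2
      (by rw [abs_of_nonneg ht.1]; exact ht.2.le.trans hb'r)
  · have hFl := hF h hF0
      (fun l hl => ⟨(hW l hl.le).1, (hW l hl.le).2.trans (le_abs_self _)⟩) l hl
    exact hFl.abs_le (by rw [abs_of_nonneg ht.1]; exact ht.2.trans_le hb'r')

end IsNablaExpansion

end Expansion

namespace SeriesU

variable (U : SeriesU)

theorem summable_abs : Summable fun j => |U.u j| := by
  obtain ⟨r, hr, h⟩ := U.radius_gt_one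
  exact .of_nonneg_of_le (fun j => abs_nonneg _)
    (fun j => le_mul_of_one_le_right (abs_nonneg _) (one_le_pow₀ hr.le)) h

variable {x : ℝ}

theorem norm_term_le (hx : x ∈ Icc (-1 : ℝ) 1) (j : ℕ) : ‖U.u j * x ^ j‖ ≤ |U.u j| := by
  rw [norm_mul, norm_pow, Real.norm_eq_abs, Real.norm_eq_abs]
  exact mul_le_of_le_one_right (abs_nonneg _) (pow_le_one₀ (abs_nonneg _) (abs_le.2 hx))

theorem abs_eval_le_norm (hx : x ∈ Icc (-1 : ℝ) 1) : |U.eval x| ≤ U.norm :=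
  tsum_of_norm_bounded U.summable_abs.hasSum (U.norm_term_le hx)

theorem continuousOn_eval : ContinuousOn U.eval (Icc (-1 : ℝ) 1) :=
  continuousOn_tsum (fun j => by fun_prop) U.summable_abs fun j _ hx => U.norm_term_le hx j

theorem hasBoundedExtension_eval {r c : ℝ} (hc : |c| + r ≤ 1) :
    HasBoundedExtension r U.norm (fun s => U.eval (s + c)) := by
  simpa [SeriesU.norm, SeriesU.eval] using
    HasBoundedExtension.tsum (a := U.u) (R := 1) (by simpa using U.summable_abs) hc

end SeriesU

section SolutionYL

variable {E : Type*} {P : ℝ → ℝ → ℝ} {V : E → ℝ → ℝ} {θ x x₀ ε lam M : ℝ} {a : E} {U : SeriesU}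

theorem Dfun_pos : 0 < Dfun P V x ε a lam :=
  exp_pos _

variable (hP : ContinuousOn (fun t => P t ε) (Ioc θ 1)) (hV : ContinuousOn (V a) (Ioc θ 1))
  (hPpos : ∀ t ∈ Ioc θ 1, 0 < P t ε)

include hP hV hPpos

theorem intervalIntegrable_div (hx : x ∈ Ioc θ 1) :
    IntervalIntegrable (fun t => V a t / P t ε) MeasureTheory.volume 1 x := by
  apply ContinuousOn.intervalIntegrable
  rw [uIcc_of_ge hx.2]
  exact (hV.div hP fun t ht => (hPpos t ht).ne').mono fun t ht => ⟨hx.1.trans_le ht.1, ht.2⟩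

theorem hasDerivAt_Dfun (hx : x ∈ Ioo θ 1) :
    HasDerivAt (fun x => Dfun P V x ε a lam)
      (Dfun P V x ε a lam * (lam * (V a x / P x ε))) x := by
  have hcont : ContinuousOn (fun t => V a t / P t ε) (Ioo θ 1) :=
    (hV.div hP fun t ht => (hPpos t ht).ne').mono Ioo_subset_Ioc_self
  have hint := integral_hasDerivAt_right
    (intervalIntegrable_div hP hV hPpos (Ioo_subset_Ioc_self hx))
    (hcont.stronglyMeasurableAtFilter isOpen_Ioo x hx)
    (hcont.continuousAt (isOpen_Ioo.mem_nhds hx))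
  exact (hint.const_mul lam).exp

theorem continuousOn_Dfun : ContinuousOn (fun x => Dfun P V x ε a lam) (Ioc θ 1) := by
  intro x hx
  obtain ⟨y, hθy, hyx⟩ := exists_between hx.1
  have hy : y ∈ Ioc θ 1 := ⟨hθy, hyx.le.trans hx.2⟩
  have hint := continuousOn_primitive_interval' (intervalIntegrable_div hP hV hPpos hy)
    left_mem_uIcc
  rw [uIcc_of_ge hy.2] at hint
  have hD : ContinuousWithinAt (fun x => Dfun P V x ε a lam) (Icc y 1) x :=
    ((hint x ⟨hyx.le, hx.2⟩).const_smul lam).rexp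
  refine hD.mono_of_mem_nhdsWithin ?_
  filter_upwards [self_mem_nhdsWithin, mem_nhdsWithin_of_mem_nhds (Ioi_mem_nhds hyx)] with t ht hyt
  exact ⟨le_of_lt hyt, ht.2⟩

variable (hθ : -1 ≤ θ)

include hθ

theorem continuousOn_div_mul_Dfun :
    ContinuousOn (fun t => U.eval t / (P t ε * Dfun P V t ε a lam)) (Ioc θ 1) :=
  have hU : ContinuousOn U.eval (Ioc θ 1) :=
    U.continuousOn_eval.mono fun _ ht => ⟨hθ.trans ht.1.le, ht.2⟩
  hU.div (hP.mul (continuousOn_Dfun hP hV hPpos)) fun t ht => (mul_pos (hPpos t ht) Dfun_pos).ne'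

theorem intervalIntegrable_div_mul_Dfun (hx₀ : x₀ ≤ 1) (hx : x ∈ Ioc θ x₀) :
    IntervalIntegrable (fun t => U.eval t / (P t ε * Dfun P V t ε a lam))
      MeasureTheory.volume x x₀ := by
  apply ContinuousOn.intervalIntegrable
  rw [uIcc_of_le hx.2]
  exact (continuousOn_div_mul_Dfun hP hV hPpos hθ).mono fun t ht =>
    ⟨hx.1.trans_le ht.1, ht.2.trans hx₀⟩

theorem hasDerivAt_yL (hlam : lam ≠ 0) (hx₀ : x₀ ≤ 1) (hx : x ∈ Ioo θ x₀) :
    HasDerivAt (fun x => yL P V x x₀ ε a lam U)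
      (lam * (V a x * yL P V x x₀ ε a lam U - 1 / lam * U.eval x) / P x ε) x := by
  have hx1 : x ∈ Ioo θ 1 := ⟨hx.1, hx.2.trans_le hx₀⟩
  have hcont : ContinuousOn (fun t => U.eval t / (P t ε * Dfun P V t ε a lam)) (Ioo θ 1) :=
    (continuousOn_div_mul_Dfun hP hV hPpos hθ).mono Ioo_subset_Ioc_self
  have hint := integral_hasDerivAt_left
    (intervalIntegrable_div_mul_Dfun hP hV hPpos hθ hx₀ (Ioo_subset_Ioc_self hx))
    (hcont.stronglyMeasurableAtFilter isOpen_Ioo x hx1)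
    (hcont.continuousAt (isOpen_Ioo.mem_nhds hx1))
  refine ((hasDerivAt_Dfun hP hV hPpos hx1).mul hint).congr_deriv ?_
  have hD : Dfun P V x ε a lam ≠ 0 := Dfun_pos.ne'
  have hPx : P x ε ≠ 0 := (hPpos x (Ioo_subset_Ioc_self hx1)).ne'
  simp only [yL]
  field_simp
  ring

theorem continuousOn_yL (hx₀ : x₀ ≤ 1) (hx : x ∈ Ioc θ x₀) :
    ContinuousOn (fun x => yL P V x x₀ ε a lam U) (Icc x x₀) := by
  have hint := continuousOn_primitive_interval'
    (intervalIntegrable_div_mul_Dfun (lam := lam) (U := U) hP hV hPpos hθ hx₀ hx) right_mem_uIcc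
  rw [uIcc_of_le hx.2] at hint
  have hD : ContinuousOn (fun x => Dfun P V x ε a lam) (Icc x x₀) :=
    (continuousOn_Dfun hP hV hPpos).mono fun t ht => ⟨hx.1.trans_le ht.1, ht.2.trans hx₀⟩
  refine (hD.mul hint.neg).congr fun t _ => ?_
  simp only [yL, integral_symm x₀ t, Pi.mul_apply, Pi.neg_apply]

theorem abs_yL_le (hlam : 0 < lam) (hVpos : ∀ t ∈ Ioc θ 1, 0 < V a t)
    (hM : 0 ≤ M) (hUM : ∀ t ∈ Ioc θ 1, |1 / lam * U.eval t| ≤ M * V a t) (hx₀ : x₀ ≤ 1)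
    (hx : x ∈ Ioc θ x₀) : |yL P V x x₀ ε a lam U| ≤ M := by
  have hIoc : Ico x x₀ ⊆ Ioc θ 1 := fun t ht => ⟨hx.1.trans_le ht.1, ht.2.le.trans hx₀⟩
  exact abs_le_of_hasDerivAt_eq_div (z := fun x => yL P V x x₀ ε a lam U) hx.2 hlam
    (continuousOn_yL hP hV hPpos hθ hx₀ hx)
    (fun t ht => hasDerivAt_yL hP hV hPpos hθ hlam.ne' hx₀ ⟨hx.1.trans_le ht.1, ht.2⟩)
    (fun t ht => hPpos t (hIoc ht)) (fun t ht => hVpos t (hIoc ht)) (fun t ht => hUM t (hIoc ht))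
    (by simpa [yL] using hM)

end SolutionYL

section UniformBounds

section LargeParameter

variable {w Q : ℝ → ℝ} {lam lam₀ : ℝ} {l N : ℕ}

theorem abs_natCast_div_le (hlam₀ : 0 < lam₀) (hlam : lam₀ ≤ lam) (hl : l ≤ N) :
    |(l : ℝ) / lam| ≤ N / lam₀ := by
  rw [abs_of_nonneg (div_nonneg l.cast_nonneg (hlam₀.le.trans hlam))]
  gcongr

theorem HasBoundedExtension.shiftedCoeff {r C C' : ℝ} (hw : HasBoundedExtension r C w)
    (hQ : HasBoundedExtension r C' Q) (hlam₀ : 0 < lam₀) (hlam : lam₀ ≤ lam) (hl : l ≤ N) :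
    HasBoundedExtension r (C + N / lam₀ * C') (shiftedCoeff lam w Q l) := by
  refine (hw.add (hQ.const_mul (a := -(l / lam)) ?_)).congr fun s _ => ?_
  · rw [abs_neg]
    exact abs_natCast_div_le hlam₀ hlam hl
  · rw [_root_.shiftedCoeff]
    ring

theorem half_le_shiftedCoeff {v s : ℝ} (hw : v ≤ w s) (hQ : N / lam₀ * |Q s| ≤ v / 2)
    (hlam₀ : 0 < lam₀) (hlam : lam₀ ≤ lam) (hl : l ≤ N) : v / 2 ≤ shiftedCoeff lam w Q l s := by
  have hle : l / lam * Q s ≤ v / 2 := calc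
    l / lam * Q s ≤ |l / lam| * |Q s| := (le_abs_self _).trans (abs_mul _ _).le
    _ ≤ N / lam₀ * |Q s| := by
      gcongr
      exact abs_natCast_div_le hlam₀ hlam hl
    _ ≤ v / 2 := hQ
  rw [shiftedCoeff]
  linarith

theorem abs_one_div_le (hlam₀ : 0 < lam₀) (hlam : lam₀ ≤ lam) : |1 / lam| ≤ 1 / lam₀ := by
  simpa using abs_natCast_div_le (l := 1) (N := 1) hlam₀ hlam le_rfl

theorem SeriesU.hasBoundedExtension_one_div_mul_eval {r x : ℝ} {U : SeriesU} (hlam₀ : 0 < lam₀)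
    (hlam : lam₀ ≤ lam) (hU : U.norm ≤ 1) (hx : |x| + r ≤ 1) :
    HasBoundedExtension r (1 / lam₀) (fun s => 1 / lam * U.eval (s + x)) := by
  rw [← mul_one (1 / lam₀)]
  exact ((U.hasBoundedExtension_eval hx).mono le_rfl hU).const_mul (abs_one_div_le hlam₀ hlam)

theorem SeriesU.abs_one_div_mul_eval_le {v x y : ℝ} {U : SeriesU} (hlam₀ : 0 < lam₀)
    (hlam : lam₀ ≤ lam) (hU : U.norm ≤ 1) (hx : x ∈ Icc (-1 : ℝ) 1) (hv : 0 < v) (hvy : v ≤ y) :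
    |1 / lam * U.eval x| ≤ 1 / (lam₀ * v) * y := by
  calc |1 / lam * U.eval x| = |1 / lam| * |U.eval x| := abs_mul _ _
    _ ≤ 1 / lam₀ * 1 := by
      gcongr
      exacts [abs_one_div_le hlam₀ hlam, (U.abs_eval_le_norm hx).trans hU]
    _ = 1 / (lam₀ * v) * v := by field_simp
    _ ≤ 1 / (lam₀ * v) * y := by gcongr

end LargeParameter

variable {E : Type*} [NormedAddCommGroup E] [NormedSpace ℝ E] {P Q : ℝ → ℝ → ℝ} {σ : ℝ → ℝ}
  {V : E → ℝ → ℝ} {Ka : Set E} {lam₀ v : ℝ}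

theorem exists_eventually_hasBoundedExtension_comp_add (hKa : IsCompact Ka)
    (hV : ∀ a ∈ Ka, AnalyticAt ℝ (fun z : E × ℝ => V z.1 z.2) (a, 0)) :
    ∃ r > 0, ∃ C, ∀ᶠ c in 𝓝 (0 : ℝ), ∀ a ∈ Ka,
      HasBoundedExtension r C (fun s => V a (s + c)) := by
  have hG : ∀ x ∈ ({0} : Set ℝ) ×ˢ Ka,
      AnalyticAt ℝ (fun z : (ℝ × E) × ℝ => V z.1.2 (z.2 + z.1.1)) (x, 0) := by
    rintro ⟨c, a⟩ ⟨rfl, ha⟩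
    exact AnalyticAt.comp_of_eq (f := fun z : (ℝ × E) × ℝ => (z.1.2, z.2 + z.1.1)) (hV a ha)
      ((analyticAt_snd.comp analyticAt_fst).prod
        (analyticAt_snd.add (analyticAt_fst.comp analyticAt_fst))) (by simp)
  obtain ⟨r, hr, C, h⟩ :=
    exists_eventually_nhdsSet_hasBoundedExtension (isCompact_singleton.prod hKa) hG
  rw [isCompact_singleton.nhdsSet_prod_eq hKa, nhdsSet_singleton] at h
  exact ⟨r, hr, C,
    eventually_prod_principal_iff.1 (h.filter_mono (prod_mono le_rfl principal_le_nhdsSet))⟩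

theorem exists_eventually_hasBoundedExtension_shiftedCoeff (hKa : IsCompact Ka)
    (hVa : ∀ a ∈ Ka, AnalyticAt ℝ (fun z : E × ℝ => V z.1 z.2) (a, 0))
    (hVv : ∀ᶠ x in 𝓝 (0 : ℝ), ∀ a ∈ Ka, v ≤ V a x) (hv : 0 < v)
    (hσ : Tendsto σ (𝓝 0) (𝓝 0)) (hQa : AnalyticAt ℝ (fun z : ℝ × ℝ => Q z.1 z.2) (0, 0))
    (hQ0 : Q 0 0 = 0) (hlam₀ : 0 < lam₀) (N : ℕ) :
    ∃ r > 0, ∃ D, ∀ᶠ e in 𝓝 0, ∀ a ∈ Ka, ∀ lam, lam₀ ≤ lam → ∀ l ≤ N,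
      HasBoundedExtension r D
        (shiftedCoeff lam (fun s => V a (s + σ e)) (fun s => Q s e) l) ∧
      v / 2 ≤ shiftedCoeff lam (fun s => V a (s + σ e)) (fun s => Q s e) l 0 := by
  have hQswap : AnalyticAt ℝ (fun z : ℝ × ℝ => Q z.2 z.1) (0, 0) :=
    AnalyticAt.comp_of_eq (f := fun z : ℝ × ℝ => (z.2, z.1)) hQa
      (analyticAt_snd.prod analyticAt_fst) rfl
  have hQsmall : ∀ᶠ e in 𝓝 0, N / lam₀ * |Q 0 e| < v / 2 := by
    have hcont : ContinuousAt (fun e => N / lam₀ * |Q 0 e|) 0 :=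
      (ContinuousAt.comp (f := fun e : ℝ => ((0 : ℝ), e)) hQa.continuousAt
        (by fun_prop)).abs.const_mul _
    exact hcont.eventually (gt_mem_nhds (by simpa [hQ0] using half_pos hv))
  obtain ⟨rV, hrV, CV, hBV⟩ := exists_eventually_hasBoundedExtension_comp_add hKa hVa
  obtain ⟨rQ, hrQ, CQ, hBQ⟩ := exists_eventually_hasBoundedExtension hQswap
  refine ⟨min rV rQ, lt_min hrV hrQ, CV + N / lam₀ * CQ, ?_⟩
  filter_upwards [hσ.eventually hBV, hσ.eventually hVv, hBQ, hQsmall]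
    with e hBVe hVve hBQe hQe a ha lam hlam l hl
  refine ⟨((hBVe a ha).mono (min_le_left _ _) le_rfl).shiftedCoeff
    (hBQe.mono (min_le_right _ _) le_rfl) hlam₀ hlam hl,
    half_le_shiftedCoeff ?_ hQe.le hlam₀ hlam hl⟩
  simpa using hVve a ha

theorem continuousOn_of_forall_analyticAt {S : Set ℝ} {a : E}
    (hV : ∀ x ∈ S, AnalyticAt ℝ (fun z : E × ℝ => V z.1 z.2) (a, x)) : ContinuousOn (V a) S :=
  fun x hx => (ContinuousAt.comp (f := fun t : ℝ => (a, t)) (hV x hx).continuousAt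
    (by fun_prop)).continuousWithinAt

theorem exists_eventually_abs_scaledRemainder_yL_le {ρ : ℕ} (hP : ∀ ε, Continuous fun x => P x ε)
    (hσ : Tendsto σ (𝓝 0) (𝓝 0)) (hQdef : ∀ s e : ℝ, s * Q s e = P (s + σ e) (e ^ ρ))
    (hQa : AnalyticAt ℝ (fun z : ℝ × ℝ => Q z.1 z.2) (0, 0)) (hQ0 : Q 0 0 = 0)
    (hKa : IsCompact Ka)
    (hVa : ∀ a ∈ Ka, ∀ x ∈ Icc (-1 : ℝ) 1, AnalyticAt ℝ (fun z : E × ℝ => V z.1 z.2) (a, x))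
    (hVpos : ∀ a ∈ Ka, ∀ x ∈ Icc (-1 : ℝ) 1, 0 < V a x)
    {F : ℕ → ℝ → ℝ → E → ℝ → SeriesU → ℝ} {c : ℕ → ℝ → E → ℝ → SeriesU → ℝ}
    (hF0 : ∀ s e a lam U, F 0 s e a lam U = 1 / lam * U.eval (s + σ e))
    (hFc : ∀ e a lam U, IsNablaExpansion
      (shiftedCoeff lam (fun s => V a (s + σ e)) (fun s => Q s e))
      (fun l s => F l s e a lam U) (fun l => c l e a lam U))
    (hlam₀ : 0 < lam₀) {m : ℝ} (hm : 0 < m) (N : ℕ) :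
    ∃ s₁ > 0, ∃ M, ∀ᶠ e in 𝓝 0, (∀ x ∈ Ioc (σ e) 1, 0 < P x (e ^ ρ)) →
      ∀ s ∈ Ioc 0 s₁, ∀ x₀ ∈ Icc m 1, ∀ a ∈ Ka, ∀ lam, lam₀ ≤ lam → ∀ U : SeriesU, U.norm ≤ 1 →
        |scaledRemainder (fun s => yL P V (s + σ e) x₀ (e ^ ρ) a lam U)
          (fun j => c j e a lam U) N s| ≤ M := by
  obtain ⟨v, hv, hVv⟩ := (hKa.prod isCompact_Icc).exists_forall_le'
    (fun z hz => (hVa z.1 hz.1 z.2 hz.2).continuousAt.continuousWithinAt)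
    (fun z hz => hVpos z.1 hz.1 z.2 hz.2)
  have hI : Icc (-1 : ℝ) 1 ∈ 𝓝 0 := Icc_mem_nhds (by norm_num) (by norm_num)
  obtain ⟨r, hr, D, hW⟩ := exists_eventually_hasBoundedExtension_shiftedCoeff hKa
    (fun a ha => hVa a ha 0 (mem_of_mem_nhds hI))
    (by filter_upwards [hI] with x hx a ha using hVv (a, x) ⟨ha, hx⟩) hv hσ hQa hQ0 hlam₀ N
  obtain ⟨s₁, hs₁, M, hM⟩ := IsNablaExpansion.exists_forall_abs_scaledRemainder_le
    (r := min r (1 / 2)) (v := v / 2) (D := max D (v / 2)) (b := m / 2) (by positivity)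
    (half_pos hv) (le_max_right _ _) (half_pos hm) (1 / lam₀) (1 / (lam₀ * v)) N
  refine ⟨s₁, hs₁, M, ?_⟩
  have hσsmall : ∀ᶠ e in 𝓝 0, |σ e| < min (1 / 2) (m / 2) :=
    hσ.abs.eventually (gt_mem_nhds (by simpa using hm))
  filter_upwards [hW, hσsmall] with e hWe hσe hPpos s hs x₀ hx₀ a ha lam hlam U hU
  obtain ⟨hσhalf, hσm⟩ := lt_min_iff.1 hσe
  have hlampos : 0 < lam := hlam₀.trans_le hlam
  have hσ1 : -1 ≤ σ e := by linarith [(abs_lt.1 hσhalf).1]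
  have hIoc : Ioc (σ e) 1 ⊆ Icc (-1) 1 := fun t ht => ⟨hσ1.trans ht.1.le, ht.2⟩
  have hVcont : ContinuousOn (V a) (Ioc (σ e) 1) :=
    continuousOn_of_forall_analyticAt fun t ht => hVa a ha t (hIoc ht)
  have hmem : ∀ t ∈ Ioo 0 (m / 2), t + σ e ∈ Ioo (σ e) x₀ := fun t ht =>
    ⟨lt_add_of_pos_left _ ht.1, by linarith [ht.2, hx₀.1, le_abs_self (σ e)]⟩
  refine hM hlampos (hFc e a lam U) ?_ (fun l hl => ⟨?_, (hWe a ha lam hlam l hl).2⟩)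
    (fun t ht => ?_) (fun t ht => ?_) (fun t ht => ?_) s hs
  · simp only [hF0]
    exact U.hasBoundedExtension_one_div_mul_eval hlam₀ hlam hU
      (by linarith [min_le_right r (1 / 2)])
  · exact (hWe a ha lam hlam l hl).1.mono (min_le_left _ _) (le_max_left _ _)
  · exact hQdef t e ▸ hPpos _ ⟨(hmem t ht).1, (hmem t ht).2.le.trans hx₀.2⟩
  · simp only [hF0, hQdef]
    exact (hasDerivAt_yL (hP _).continuousOn hVcont hPpos hσ1 hlampos.ne' hx₀.2 (hmem t ht))
      |>.comp_add_const t (σ e)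
  · exact abs_yL_le (hP _).continuousOn hVcont hPpos hσ1 hlampos
      (fun t ht => hVpos a ha t (hIoc ht)) (by positivity) (fun t ht =>
        U.abs_one_div_mul_eval_le hlam₀ hlam hU (hIoc ht) hv (hVv (a, t) ⟨ha, hIoc ht⟩)) hx₀.2
      (Ioo_subset_Ioc_self (hmem t ht))

theorem div_pow_eq_mul_scaledRemainder_succ (T : ℝ → ℝ) (c : ℕ → ℝ) (l : ℕ) {s : ℝ}
    (hs : s ≠ 0) :
    (T s - ∑ j ∈ Finset.range (l + 1), c j * s ^ j) / s ^ l =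
      s * scaledRemainder T c (l + 1) s := by
  rw [scaledRemainder, pow_succ']
  field_simp

theorem eventually_mul_lt_of_pos (M : ℝ) {δ : ℝ} (hδ : 0 < δ) : ∀ᶠ s in 𝓝[>] (0 : ℝ), s * M < δ :=
  (Continuous.tendsto' (by fun_prop) 0 0 (zero_mul M)).mono_left nhdsWithin_le_nhds
    |>.eventually (gt_mem_nhds hδ)

theorem tendsto_rpow_one_div_nhds_zero {ρ : ℕ} (hρ : 0 < ρ) :
    Tendsto (fun ε : ℝ => ε ^ (1 / (ρ : ℝ))) (𝓝 0) (𝓝 0) := by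
  have hpos : (0 : ℝ) < 1 / ρ := by positivity
  simpa only [zero_rpow hpos.ne'] using
    (continuousAt_rpow_const 0 (1 / (ρ : ℝ)) (.inr hpos.le)).tendsto

theorem pos_of_continuous_of_ne_zero {f : ℝ → ℝ} {θ b : ℝ} (hf : Continuous f) (hb : 0 < f b)
    (hne : ∀ x ∈ Ioc θ b, f x ≠ 0) : ∀ x ∈ Ioc θ b, 0 < f x := by
  intro x hx
  by_contra! hle
  obtain ⟨y, hy, hy0⟩ := intermediate_value_Icc hx.2 hf.continuousOn ⟨hle, hb.le⟩
  exact hne y ⟨hx.1.trans_le hy.1, hy.2⟩ hy0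

theorem eventually_forall_mem_Ioc_pos {ρ : ℕ} (hρ : 0 < ρ) (hP : ∀ ε, Continuous fun x => P x ε)
    (hP1 : ContinuousAt (P 1) 0) (hP1pos : 0 < P 1 0) (hσ : Tendsto σ (𝓝 0) (𝓝 0))
    (hroot : ∀ᶠ ε in 𝓝[≥] (0 : ℝ),
      ∀ x ∈ Icc (-1 : ℝ) 1, σ (ε ^ (1 / (ρ : ℝ))) < x → P x ε ≠ 0) :
    ∀ᶠ ε in 𝓝[≥] (0 : ℝ), ∀ x ∈ Ioc (σ (ε ^ (1 / (ρ : ℝ)))) 1, 0 < P x ε := by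
  have hσge : ∀ᶠ ε in 𝓝 0, -1 ≤ σ (ε ^ (1 / (ρ : ℝ))) :=
    (hσ.comp (tendsto_rpow_one_div_nhds_zero hρ)).eventually (le_mem_nhds (by norm_num))
  filter_upwards [(hP1.eventually (lt_mem_nhds hP1pos)).filter_mono nhdsWithin_le_nhds,
    hσge.filter_mono nhdsWithin_le_nhds, hroot] with ε hP1ε hσε hrootε
  exact pos_of_continuous_of_ne_zero (hP ε) hP1ε
    fun x hx => hrootε x ⟨hσε.trans hx.1.le, hx.2⟩ hx.1

end UniformBounds

theorem basis_of_induction_general {E : Type*} [NormedAddCommGroup E] [NormedSpace ℝ E]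
    (ρ : ℕ) (hρ : 0 < ρ) (A : Set E) (P : ℝ → ℝ → ℝ) (hP : ∀ ε, Continuous fun x => P x ε)
    (σ : ℝ → ℝ) (hσ : Tendsto σ (𝓝 0) (𝓝 0))
    (hPpos : ∀ᶠ ε in 𝓝[≥] (0 : ℝ), ∀ x ∈ Ioc (σ (ε ^ (1 / (ρ : ℝ)))) 1, 0 < P x ε)
    (Q : ℝ → ℝ → ℝ) (hQdef : ∀ s e : ℝ, s * Q s e = P (s + σ e) (e ^ ρ))
    (hQa : AnalyticAt ℝ (fun z : ℝ × ℝ => Q z.1 z.2) (0, 0)) (hQ0 : Q 0 0 = 0)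
    (V : E → ℝ → ℝ)
    (hVa : ∀ a ∈ A, ∀ x ∈ Icc (-1 : ℝ) 1, AnalyticAt ℝ (fun z : E × ℝ => V z.1 z.2) (a, x))
    (hVpos : ∀ a ∈ A, ∀ x ∈ Icc (-1 : ℝ) 1, 0 < V a x)
    (F : ℕ → ℝ → ℝ → E → ℝ → SeriesU → ℝ) (c : ℕ → ℝ → E → ℝ → SeriesU → ℝ)
    (hF0 : ∀ s e a lam U, F 0 s e a lam U = 1 / lam * U.eval (s + σ e))
    (hFc : ∀ e a lam U, IsNablaExpansion
      (shiftedCoeff lam (fun s => V a (s + σ e)) (fun s => Q s e))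
      (fun l s => F l s e a lam U) (fun l => c l e a lam U)) :
    ∀ ℓ : ℕ, ∀ lam₀ : ℝ, 0 < lam₀ →
      ∀ Kx : Set ℝ, IsCompact Kx → Kx ⊆ Ioc 0 1 →
      ∀ Ka : Set E, IsCompact Ka → Ka ⊆ A →
        ∃ ε₀ > (0 : ℝ), ∀ δ > (0 : ℝ), ∀ᶠ s in 𝓝[>] (0 : ℝ),
          ∀ x₀ ∈ Kx, ∀ ε ∈ Icc (0 : ℝ) ε₀, ∀ a ∈ Ka, ∀ lam : ℝ, lam₀ ≤ lam →
            ∀ U : SeriesU, U.norm ≤ 1 →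
              |(yL P V (s + σ (ε ^ (1 / (ρ : ℝ)))) x₀ ε a lam U -
                  ∑ j ∈ Finset.range (ℓ + 1),
                    c j (ε ^ (1 / (ρ : ℝ))) a lam U * s ^ j) / s ^ ℓ| < δ := by
  intro ℓ lam₀ hlam₀ Kx hKx hKx_sub Ka hKa hKa_sub
  obtain ⟨m, hm, hKx_ge⟩ := hKx.exists_forall_le' continuousOn_id fun x hx => (hKx_sub hx).1
  obtain ⟨s₁, hs₁, M, hM⟩ := exists_eventually_abs_scaledRemainder_yL_le hP hσ hQdef hQa hQ0 hKa
    (fun a ha => hVa a (hKa_sub ha)) (fun a ha => hVpos a (hKa_sub ha)) hF0 hFc hlam₀ hm (ℓ + 1)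
  have hMroot := (tendsto_rpow_one_div_nhds_zero hρ).eventually hM
  obtain ⟨ε₀, hε₀, hsmall⟩ := mem_nhdsGE_iff_exists_Icc_subset.1
    ((hMroot.filter_mono nhdsWithin_le_nhds).and hPpos)
  refine ⟨ε₀, hε₀, fun δ hδ => ?_⟩
  filter_upwards [eventually_mul_lt_of_pos M hδ, Ioc_mem_nhdsGT hs₁]
    with s hsM hs x₀ hx₀ ε hε a ha lam hlam U hU
  obtain ⟨hbound, hpos⟩ := hsmall hε
  have hpow : (ε ^ (1 / (ρ : ℝ))) ^ ρ = ε := by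
    rw [one_div, rpow_inv_natCast_pow hε.1 hρ.ne']
  rw [hpow] at hbound
  rw [div_pow_eq_mul_scaledRemainder_succ
    (fun s => yL P V (s + σ (ε ^ (1 / (ρ : ℝ)))) x₀ ε a lam U)
    (fun j => c j (ε ^ (1 / (ρ : ℝ))) a lam U) ℓ hs.1.ne', abs_mul, abs_of_pos hs.1]
  calc s * _ ≤ s * M := mul_le_mul_of_nonneg_left
        (hbound hpos s hs x₀ ⟨hKx_ge x₀ hx₀, (hKx_sub hx₀).2⟩ a ha lam hlam U hU) hs.1.le
    _ < δ := hsM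

/-- **Lemma 2.7 of the paper (basis of the induction for Theorem A(1)).**  Under (H1) and
(H2), with the coefficients `c_ℓ` given by the recursive construction of Definition 2.1
(`F₀ = 𝒰`, `𝒱_ℓ = 𝒱 − (ℓ/λ)𝒬`, `F_{ℓ+1} = 𝒱_ℓ∇(F_ℓ/𝒱_ℓ)`, `c_ℓ = (F_ℓ/𝒱_ℓ)(0)`), for
each `ℓ ∈ ℤ⁺`, `λ₀ > 0` and compact sets `K_x ⊆ (0,1]`, `K_a ⊆ A`, there exists `ε₀ > 0`
such that `h_ℓ(s) = (𝒯(s) − Σ_ℓ(s))/s^ℓ`, where `𝒯(s) = y_L(s+ϑ_ε;x₀,ε,a,λ,U)`, tends to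
zero as `s → 0⁺`, uniformly on `K_x × [0,ε₀] × K_a × [λ₀,∞) × 𝒰₁`. -/
theorem basis_of_induction {E : Type*} [NormedAddCommGroup E] [NormedSpace ℝ E]
    (μ ρ ν : ℕ) (hμ : 0 < μ) (hρ : 0 < ρ) (hν : 0 < ν)
    (A : Set E) (hA : IsOpen A)
    (P : ℝ → ℝ → ℝ) (p : ℕ → ℝ → ℝ)
    (hpa : ∀ i, AnalyticAt ℝ (p i) 0)
    (hPpoly : ∀ x ε : ℝ, P x ε = ∑ i ∈ Finset.range (μ + 2), p i ε * x ^ i)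
    (hP0 : ∀ x : ℝ, P x 0 = x ^ (μ + 1))
    (σ : ℝ → ℝ) (hσa : AnalyticAt ℝ σ 0) (hσ0 : σ 0 = 0)
    (hroot : ∀ᶠ ε in 𝓝[≥] (0 : ℝ),
      P (σ (ε ^ (1 / (ρ : ℝ)))) ε = 0 ∧
      ∀ x ∈ Icc (-1 : ℝ) 1, σ (ε ^ (1 / (ρ : ℝ))) < x → P x ε ≠ 0)
    (Q : ℝ → ℝ → ℝ)
    (hQdef : ∀ s e : ℝ, s * Q s e = P (s + σ e) (e ^ ρ))
    (hQa : AnalyticAt ℝ (fun z : ℝ × ℝ => Q z.1 z.2) (0, 0))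
    (hQ0 : ∀ s : ℝ, Q s 0 = s ^ μ)
    (q : ℕ → ℕ → ℝ)
    (hqsum : ∀ᶠ z : ℝ × ℝ in 𝓝 (0, 0),
      HasSum (fun ij : ℕ × ℕ => q ij.1 ij.2 * z.1 ^ ij.1 * z.2 ^ ij.2) (Q z.1 z.2))
    (hχ : 0 < q 0 ν) (hνmin : ∀ j < ν, q 0 j = 0)
    (hH1 : ∀ (i j : ℕ), q i j ≠ 0 → 1 ≤ (i : ℝ) / μ + (j : ℝ) / ν)
    (hH2 : ∀ θ ∈ Icc (0 : ℝ) (π / 2),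
      0 < ∑ i ∈ Finset.range (μ + 1), ∑ j ∈ Finset.range (ν + 1),
        (if (i : ℝ) / μ + (j : ℝ) / ν = 1 then q i j * sin θ ^ i * cos θ ^ j else 0))
    (V : E → ℝ → ℝ)
    (hVa : ∀ a ∈ A, ∀ x ∈ Icc (-1 : ℝ) 1,
      AnalyticAt ℝ (fun z : E × ℝ => V z.1 z.2) (a, x))
    (hV0 : ∀ a ∈ A, V a 0 = 1)
    (hVpos : ∀ a ∈ A, ∀ x ∈ Icc (-1 : ℝ) 1, 0 < V a x)
    -- the recursively defined functions `F_ℓ` and coefficients `c_ℓ` of Definition 2.1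
    (F : ℕ → ℝ → ℝ → E → ℝ → SeriesU → ℝ) (c : ℕ → ℝ → E → ℝ → SeriesU → ℝ)
    (hF0 : ∀ (s e : ℝ) (a : E) (lam : ℝ) (U : SeriesU),
      F 0 s e a lam U = (1 / lam) * U.eval (s + σ e))
    (hFs : ∀ (l : ℕ) (s e : ℝ) (a : E) (lam : ℝ) (U : SeriesU),
      F (l + 1) s e a lam U =
        (V a (s + σ e) - (l / lam) * Q s e) *
          nabla (fun t => F l t e a lam U / (V a (t + σ e) - (l / lam) * Q t e)) s)
    (hcdef : ∀ (l : ℕ) (e : ℝ) (a : E) (lam : ℝ) (U : SeriesU),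
      c l e a lam U = F l 0 e a lam U / (V a (σ e) - (l / lam) * Q 0 e)) :
    ∀ ℓ : ℕ, ∀ lam₀ : ℝ, 0 < lam₀ →
      ∀ Kx : Set ℝ, IsCompact Kx → Kx ⊆ Ioc 0 1 →
      ∀ Ka : Set E, IsCompact Ka → Ka ⊆ A →
        ∃ ε₀ > (0 : ℝ), ∀ δ > (0 : ℝ), ∀ᶠ s in 𝓝[>] (0 : ℝ),
          ∀ x₀ ∈ Kx, ∀ ε ∈ Icc (0 : ℝ) ε₀, ∀ a ∈ Ka, ∀ lam : ℝ, lam₀ ≤ lam →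
            ∀ U : SeriesU, U.norm ≤ 1 →
              |(yL P V (s + σ (ε ^ (1 / (ρ : ℝ)))) x₀ ε a lam U -
                  ∑ j ∈ Finset.range (ℓ + 1),
                    c j (ε ^ (1 / (ρ : ℝ))) a lam U * s ^ j) / s ^ ℓ| < δ := by
  have hPcont : ∀ ε, Continuous fun x => P x ε := fun ε => by
    simp only [hPpoly]
    fun_prop
  have hP1cont : ContinuousAt (P 1) 0 := by
    have hpcont := fun i => (hpa i).continuousAt
    rw [funext (hPpoly 1)]
    fun_prop
  have hσ : Tendsto σ (𝓝 0) (𝓝 0) := by simpa only [hσ0] using hσa.continuousAt.tendsto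
  exact basis_of_induction_general ρ hρ A P hPcont σ hσ
    (eventually_forall_mem_Ioc_pos hρ hPcont hP1cont (by simp [hP0]) hσ
      (hroot.mono fun _ h => h.2))
    Q hQdef hQa (by rw [hQ0, zero_pow hμ.ne']) V hVa hVpos F c hF0 fun e a lam U =>
      ⟨fun l s => hFs l s e a lam U, fun l => by simpa [shiftedCoeff] using hcdef l e a lam U⟩

end
end
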